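/- arXiv:2604.11718 — 3 statements merged into one kernel-verified Lean document; each statement's English description precedes it below -/
import Mathlib

section
/- Let M > 0 and ν ∈ (0, 1/2]. Let G₁, G₂ : (0,M) → ℝ be smooth positive functions with G₁(a) ≤ G₂(a) for all a ∈ (0,M), and suppose both satisfy lim_{a→0⁺} Gᵢ(a)/(4πa) = 1. Then κ₁(G₂) ≤ κ₁(G₁). If moreover G₁ < G₂ on a set of positive Lebesgue measure, then κ₁(G₂) < κ₁(G₁). -/
open MeasureTheory Real Set Filter

/-- The Rayleigh quotient of a function `f` for the one-dimensional magnetic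
Sturm–Liouville problem on `(0, M)` with weight `G` and flux `ν`. -/
noncomputable def rayleigh (M ν : ℝ) (G f : ℝ → ℝ) : ℝ :=
  (∫ a in Ioo (0:ℝ) M, (G a * (deriv f a) ^ 2 + 4 * π ^ 2 * ν ^ 2 * (f a) ^ 2 / G a)) /
    ∫ a in Ioo (0:ℝ) M, (f a) ^ 2

/-- The admissible class `𝓕(G)`: measurable functions on `(0, M)`, not a.e. zero,
differentiable, with `f ∈ L²`, `√G · f' ∈ L²` and `f/√G ∈ L²`. -/
def Admissible (M : ℝ) (G f : ℝ → ℝ) : Prop :=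
  Measurable f ∧
  ¬ (∀ᵐ a ∂(volume.restrict (Ioo (0:ℝ) M)), f a = 0) ∧
  (∀ a ∈ Ioo (0:ℝ) M, DifferentiableAt ℝ f a) ∧
  IntegrableOn (fun a => (f a) ^ 2) (Ioo 0 M) ∧
  IntegrableOn (fun a => G a * (deriv f a) ^ 2) (Ioo 0 M) ∧
  IntegrableOn (fun a => (f a) ^ 2 / G a) (Ioo 0 M)

/-- `κ₁(G)`: the infimum of the Rayleigh quotient over the admissible class. -/
noncomputable def kappa1 (M ν : ℝ) (G : ℝ → ℝ) : ℝ :=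
  sInf { q | ∃ f : ℝ → ℝ, Admissible M G f ∧ q = rayleigh M ν G f }

/-!
If `f` solves `-(G f')' + (c² / G) f = κ f` with `c = 2πν`, then `w = G f' / f` solves the Riccati
equation `w' = (c² - w²) / G - κ`. Conversely, by Picone's identity, a Riccati solution with
`w 0 = 0` and `w M > 0`, even for a weight larger than `G`, shows that `κ` lies below every Rayleigh
quotient, and a small perturbation makes this strict. Hence at `κ = κ₁(G₁)` no such solution ends
at a positive value, and the solutions for truncations of `1 / G₁` increase to a solution `w` of the
singular equation with `-κ x ≤ w x ≤ κ (M - x)`.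

The admissible classes of `G₁` and `G₂` are not nested, so a minimizer for `G₁` need not be a test
function for `G₂`. What is transplanted is `w`: the function `f` with `f' = (w / G₂) f` is
admissible for `G₂`, and `(w f²)' = N - κ f²` with `N ≥ G₂ f'² + c² f² / G₂`. Integrating, the
Rayleigh quotient of `f` is at most `κ`. The bound for `N` is strict wherever `G₁ < G₂` and
`w² ≠ c²`, and `w² = c²` happens only on a countable set because `(w²)' = -2 κ w ≠ 0` there.
-/

open scoped Interval Topology NNReal

section Calculus

variable {a b : ℝ}

lemma nonpos_of_deriv_le_mul_of_pos {d : ℝ → ℝ} {K : ℝ}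
    (hd : ∀ x ∈ Icc a b, DifferentiableAt ℝ d x) (ha : d a ≤ 0)
    (hK : ∀ x ∈ Icc a b, 0 < d x → deriv d x ≤ K * d x) {x : ℝ} (hx : x ∈ Icc a b) :
    d x ≤ 0 := by
  have le_barrier : ∀ ε > 0, d x ≤ ε * exp ((K + 1) * x) := by
    intro ε hε
    refine image_le_of_deriv_right_lt_deriv_boundary
      (B := fun y => ε * exp ((K + 1) * y)) (B' := fun y => ε * (exp ((K + 1) * y) * (K + 1)))
      (fun y hy => (hd y hy).continuousAt.continuousWithinAt)
      (fun y hy => (hd y (Ico_subset_Icc_self hy)).hasDerivAt.hasDerivWithinAt)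
      (ha.trans (mul_pos hε (exp_pos _)).le) (fun y => ?_) (fun y hy hdy => ?_) hx
    · simpa using ((hasDerivAt_id y).const_mul (K + 1)).exp.const_mul ε
    · have hpos : 0 < d y := hdy.symm ▸ mul_pos hε (exp_pos _)
      have := hK y (Ico_subset_Icc_self hy) hpos
      rw [← mul_assoc, ← hdy]
      linarith
  refine le_of_forall_pos_le_add fun ε hε => ?_
  have := le_barrier (ε / exp ((K + 1) * x)) (by positivity)
  rwa [div_mul_cancel₀ _ (exp_pos _).ne', ← zero_add ε] at this

lemma countable_preimage_singleton_of_deriv_ne_zero {s : Set ℝ} {f : ℝ → ℝ} {c : ℝ}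
    (hf : ∀ x ∈ s, f x = c → deriv f x ≠ 0) : {x ∈ s | f x = c}.Countable := by
  apply (HereditarilyLindelofSpace.isLindelof _).countable_of_isDiscrete
  rw [isDiscrete_iff_nhdsNE]
  intro x hx
  have hx' := hf x hx.1 hx.2
  have isolated := (differentiableAt_of_deriv_ne_zero hx').hasDerivAt.eventually_ne (c := c) hx'
  rw [← disjoint_iff, disjoint_principal_right]
  filter_upwards [isolated] with y hy hy'
  exact hy hy'.2

lemma frequently_mul_lt_of_integrableOn {u : ℝ → ℝ} (hb : 0 < b) (hu : IntegrableOn u (Ioo 0 b))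
    {ε : ℝ} (hε : 0 < ε) : ∃ᶠ x in 𝓝[>] 0, x * u x < ε := by
  intro h
  obtain ⟨r, hr, hru⟩ := mem_nhdsGT_iff_exists_Ioo_subset.1 h
  have hs : 0 < min r b := lt_min hr hb
  have inv_integrable : IntegrableOn (fun x : ℝ => x⁻¹) (Ioo 0 (min r b)) := by
    refine ((hu.mono_set (Ioo_subset_Ioo_right (min_le_right r b))).const_mul ε⁻¹).mono'
      measurable_inv.aestronglyMeasurable (ae_restrict_of_forall_mem measurableSet_Ioo ?_)
    intro x hx
    have hle : ε ≤ x * u x := not_lt.1 (hru ⟨hx.1, hx.2.trans_le (min_le_left r b)⟩)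
    rw [norm_inv, norm_of_nonneg hx.1.le, inv_le_iff_one_le_mul₀ hx.1, ← div_eq_inv_mul,
      div_mul_eq_mul_div, one_le_div hε, mul_comm]
    exact hle
  rw [← intervalIntegrable_iff_integrableOn_Ioo_of_le hs.le, intervalIntegrable_inv_iff]
    at inv_integrable
  exact inv_integrable.elim hs.ne (· left_mem_uIcc)

lemma frequently_mul_lt_of_differentiableAt {w u : ℝ → ℝ} (hb : 0 < b)
    (hw : DifferentiableAt ℝ w 0) (hw₀ : w 0 = 0) (hu : IntegrableOn u (Ioo 0 b))
    (hu₀ : ∀ x, 0 ≤ u x) {ε : ℝ} (hε : 0 < ε) : ∃ᶠ x in 𝓝[>] 0, w x * u x < ε := by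
  obtain ⟨C, hC, hwC⟩ := hw.isBigO_sub.exists_pos
  simp only [hw₀, sub_zero] at hwC
  refine ((frequently_mul_lt_of_integrableOn hb hu (div_pos hε hC)).and_eventually
    ((hwC.bound.filter_mono nhdsWithin_le_nhds).and self_mem_nhdsWithin)).mono ?_
  rintro x ⟨hux, hwx, hx : 0 < x⟩
  rw [norm_of_nonneg hx.le] at hwx
  calc w x * u x ≤ C * x * u x := mul_le_mul_of_nonneg_right ((le_abs_self _).trans hwx) (hu₀ x)
    _ = x * u x * C := by ring
    _ < ε := (lt_div_iff₀ hC).1 hux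

lemma integrableOn_Ioo_of_hasDerivAt_nonneg {F F' : ℝ → ℝ}
    (hF : ∀ x ∈ Ioo a b, HasDerivAt F (F' x) x) (hF' : ∀ x ∈ Ioo a b, 0 ≤ F' x)
    (hbelow : BddBelow (F '' Ioo a b)) (habove : BddAbove (F '' Ioo a b)) :
    IntegrableOn F' (Ioo a b) := by
  rcases (Ioo a b).eq_empty_or_nonempty with hab | hab
  · simp [hab]
  have hcont : ContinuousOn F (Ioo a b) := HasDerivAt.continuousOn hF
  have hmono : MonotoneOn F (Ioo a b) := by
    refine monotoneOn_of_deriv_nonneg (convex_Ioo a b) hcont ?_ ?_ <;> rw [interior_Ioo]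
    · exact fun x hx => (hF x hx).differentiableAt.differentiableWithinAt
    · exact fun x hx => (hF x hx).deriv.symm ▸ hF' x hx
  refine (intervalIntegral.integrableOn_deriv_of_nonneg (continuousOn_Icc_extendFrom_Ioo hcont
    (hmono.tendsto_nhdsWithin_Ioo_right hab hbelow)
    (hmono.tendsto_nhdsWithin_Ioo_left hab habove)) (fun x hx => ?_) hF').mono_set
    Ioo_subset_Ioc_self
  refine (hF x hx).congr_of_eventuallyEq ?_
  filter_upwards [isOpen_Ioo.mem_nhds hx] with y hy
  exact extendFrom_extends hcont y hy

lemma integral_nonneg_of_deriv_le {F ψ : ℝ → ℝ} (hab : a < b)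
    (hF : ∀ x ∈ Ioo a b, DifferentiableAt ℝ F x) (hψ : IntegrableOn ψ (Ioo a b))
    (hle : ∀ x ∈ Ioo a b, deriv F x ≤ ψ x)
    (ha : ∀ ε > 0, ∃ᶠ x in 𝓝[>] a, F x < ε) (hb : ∀ ε > 0, ∃ᶠ x in 𝓝[<] b, -ε < F x) :
    0 ≤ ∫ x in Ioo a b, ψ x := by
  have lim_integral : Tendsto (fun p : ℝ × ℝ => ∫ x in Ioc p.1 p.2, ψ x ∂volume.restrict (Ioo a b))
      (𝓝[>] a ×ˢ 𝓝[<] b) (𝓝 (∫ x in Ioo a b, ψ x)) :=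
    (aecover_Ioo_of_Ioc (tendsto_nhdsWithin_iff.1 tendsto_fst).1
      (tendsto_nhdsWithin_iff.1 tendsto_snd).1).integral_tendsto_of_countably_generated hψ
  have endpoints : ∀ᶠ p : ℝ × ℝ in 𝓝[>] a ×ˢ 𝓝[<] b,
      p.1 ∈ Ioo a ((a + b) / 2) ∧ p.2 ∈ Ioo ((a + b) / 2) b :=
    prod_mem_prod (Ioo_mem_nhdsGT (by linarith)) (Ioo_mem_nhdsLT (by linarith))
  refine le_of_forall_pos_le_add fun ε hε => ?_
  obtain ⟨⟨x, y⟩, ⟨hFx, hFy⟩, hint, hx, hy⟩ := ((frequently_prod_and.2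
    ⟨ha (ε / 3) (by positivity), hb (ε / 3) (by positivity)⟩).and_eventually
    ((lim_integral.eventually_lt_const
      (lt_add_of_pos_right (∫ x in Ioo a b, ψ x) (by positivity : 0 < ε / 3))).and
      endpoints)).exists
  have hxy : x ≤ y := (hx.2.trans hy.1).le
  have hsub : Icc x y ⊆ Ioo a b := Icc_subset_Ioo hx.1 hy.2
  have sub_le_integral : F y - F x ≤ ∫ t in x..y, ψ t :=
    intervalIntegral.sub_le_integral_of_hasDeriv_right_of_le hxy
      (fun z hz => (hF z (hsub hz)).continuousAt.continuousWithinAt)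
      (fun z hz => (hF z (hsub (Ioo_subset_Icc_self hz))).hasDerivAt.hasDerivWithinAt)
      (hψ.mono_set hsub) (fun z hz => hle z (hsub (Ioo_subset_Icc_self hz)))
  rw [Measure.restrict_restrict_of_subset (Ioc_subset_Icc_self.trans hsub),
    ← intervalIntegral.integral_of_le hxy] at hint
  linarith

end Calculus

section LimitsOfPrimitives

variable {E : Type*} [NormedAddCommGroup E] [NormedSpace ℝ E] [CompleteSpace E]
  {W W' : ℕ → ℝ → E} {w w' : ℝ → E} {β : ℝ → ℝ} {s : Set ℝ}

lemma intervalIntegrable_and_integral_eq_sub_of_tendsto {a b : ℝ}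
    (hW : ∀ n, ∀ x ∈ uIcc a b, HasDerivAt (W n) (W' n x) x)
    (hW' : ∀ n, ContinuousOn (W' n) (uIcc a b))
    (hβ : IntervalIntegrable β volume a b) (hW'β : ∀ n, ∀ x ∈ uIcc a b, ‖W' n x‖ ≤ β x)
    (hw : ∀ x ∈ uIcc a b, Tendsto (W · x) atTop (𝓝 (w x)))
    (hw' : ∀ x ∈ uIcc a b, Tendsto (W' · x) atTop (𝓝 (w' x))) :
    IntervalIntegrable w' volume a b ∧ ∫ x in a..b, w' x = w b - w a := by
  have hsub : Ι a b ⊆ uIcc a b := uIoc_subset_uIcc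
  have W'_meas : ∀ n, AEStronglyMeasurable (W' n) (volume.restrict (Ι a b)) := fun n =>
    ((hW' n).mono hsub).aestronglyMeasurable measurableSet_uIoc
  constructor
  · refine hβ.mono_fun' (aestronglyMeasurable_of_tendsto_ae atTop W'_meas
      (ae_restrict_of_forall_mem measurableSet_uIoc fun x hx => hw' x (hsub hx)))
      (ae_restrict_of_forall_mem measurableSet_uIoc fun x hx => ?_)
    exact le_of_tendsto (hw' x (hsub hx)).norm (.of_forall fun n => hW'β n x (hsub hx))
  · have lim_integral := intervalIntegral.tendsto_integral_filter_of_dominated_convergence β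
      (.of_forall W'_meas) (.of_forall fun n => ae_of_all _ fun x hx => hW'β n x (hsub hx)) hβ
      (ae_of_all _ fun x hx => hw' x (hsub hx))
    have integral_W' : ∀ n, ∫ x in a..b, W' n x = W n b - W n a := fun n =>
      intervalIntegral.integral_eq_sub_of_hasDerivAt (hW n) (hW' n).intervalIntegrable
    simp only [integral_W'] at lim_integral
    exact tendsto_nhds_unique lim_integral ((hw b right_mem_uIcc).sub (hw a left_mem_uIcc))

lemma continuousOn_of_tendsto_of_dominated (hs : IsOpen s)
    (hW : ∀ n, ∀ x ∈ s, HasDerivAt (W n) (W' n x) x) (hW' : ∀ n, ContinuousOn (W' n) s)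
    (hβ : ContinuousOn β s) (hW'β : ∀ n, ∀ x ∈ s, ‖W' n x‖ ≤ β x)
    (hw : ∀ x ∈ s, Tendsto (W · x) atTop (𝓝 (w x)))
    (hw' : ∀ x ∈ s, Tendsto (W' · x) atTop (𝓝 (w' x))) : ContinuousOn w s := by
  intro x hx
  obtain ⟨r, hr, hrs⟩ := Metric.nhds_basis_closedBall.mem_iff.1 (hs.mem_nhds hx)
  rw [Real.closedBall_eq_Icc, ← uIcc_of_le (by linarith)] at hrs
  have ftc : ∀ y ∈ uIcc (x - r) (x + r), IntervalIntegrable w' volume (x - r) y ∧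
      ∫ t in (x - r)..y, w' t = w y - w (x - r) := fun y hy => by
    have hys : uIcc (x - r) y ⊆ s := (uIcc_subset_uIcc_left hy).trans hrs
    exact intervalIntegrable_and_integral_eq_sub_of_tendsto (fun n t ht => hW n t (hys ht))
      (fun n => (hW' n).mono hys) (hβ.mono hys).intervalIntegrable
      (fun n t ht => hW'β n t (hys ht)) (fun t ht => hw t (hys ht)) (fun t ht => hw' t (hys ht))
  have primitive_cont := intervalIntegral.continuousOn_primitive_interval'
    (ftc _ right_mem_uIcc).1 left_mem_uIcc
  have w_cont : ContinuousOn w (uIcc (x - r) (x + r)) :=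
    (primitive_cont.add_const (w (x - r))).congr fun y hy => by simp [(ftc y hy).2]
  have mem_nhds : uIcc (x - r) (x + r) ∈ 𝓝 x := by
    rw [uIcc_of_le (by linarith)]
    exact Icc_mem_nhds (by linarith) (by linarith)
  exact (w_cont.continuousAt mem_nhds).continuousWithinAt

lemma hasDerivAt_of_tendsto_of_dominated (hs : IsOpen s)
    (hW : ∀ n, ∀ x ∈ s, HasDerivAt (W n) (W' n x) x) (hW' : ∀ n, ContinuousOn (W' n) s)
    (hβ : ContinuousOn β s) (hW'β : ∀ n, ∀ x ∈ s, ‖W' n x‖ ≤ β x)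
    (hw : ∀ x ∈ s, Tendsto (W · x) atTop (𝓝 (w x)))
    (hw' : ∀ x ∈ s, Tendsto (W' · x) atTop (𝓝 (w' x))) (hw'_cont : ContinuousOn w' s)
    {x : ℝ} (hx : x ∈ s) : HasDerivAt w (w' x) x := by
  have integral_hasDerivAt : HasDerivAt (fun y => w x + ∫ t in x..y, w' t) (w' x) x :=
    (intervalIntegral.integral_hasDerivAt_right .refl
      (hw'_cont.stronglyMeasurableAtFilter hs x hx)
      (hw'_cont.continuousAt (hs.mem_nhds hx))).const_add (w x)
  refine integral_hasDerivAt.congr_of_eventuallyEq ?_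
  obtain ⟨r, hr, hrs⟩ := Metric.isOpen_iff.1 hs x hx
  filter_upwards [Metric.ball_mem_nhds x hr] with y hy
  have hys : uIcc x y ⊆ s :=
    (((convex_ball x r).ordConnected).uIcc_subset (Metric.mem_ball_self hr) hy).trans hrs
  rw [(intervalIntegrable_and_integral_eq_sub_of_tendsto (fun n t ht => hW n t (hys ht))
      (fun n => (hW' n).mono hys) (hβ.mono hys).intervalIntegrable
      (fun n t ht => hW'β n t (hys ht)) (fun t ht => hw t (hys ht))
      (fun t ht => hw' t (hys ht))).2, add_sub_cancel]

end LimitsOfPrimitives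

lemma exists_forall_mem_Icc_hasDerivAt_of_lipschitzWith {E : Type*} [NormedAddCommGroup E]
    [NormedSpace ℝ E] [CompleteSpace E] {v : ℝ → E → E} {K C : ℝ≥0} {a b : ℝ} (hab : a ≤ b)
    (hlip : ∀ t, LipschitzWith K (v t)) (hcont : ∀ x, Continuous (v · x))
    (hC : ∀ t x, ‖v t x‖ ≤ C) (x₀ : E) :
    ∃ u : ℝ → E, u a = x₀ ∧ ∀ t ∈ Icc a b, HasDerivAt u (v t (u t)) t := by
  have hpl : IsPicardLindelof v (tmin := a - 1) (tmax := b + 1) ⟨a, by simp, by linarith⟩ x₀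
      (C * (b + 1 - a).toNNReal) 0 C K := by
    refine ⟨fun t _ => (hlip t).lipschitzOnWith, fun x _ => (hcont x).continuousOn,
      fun t _ x _ => hC t x, ?_⟩
    have hmax : max (b + 1 - a) (a - (a - 1)) = b + 1 - a := max_eq_left (by linarith)
    simp only [hmax, NNReal.coe_mul, NNReal.coe_zero, sub_zero,
      coe_toNNReal _ (by linarith : 0 ≤ b + 1 - a), le_refl]
  obtain ⟨u, hu, hu'⟩ := hpl.exists_eq_forall_mem_Icc_hasDerivWithinAt₀
  exact ⟨u, hu, fun t ht => (hu' t ⟨by linarith [ht.1], by linarith [ht.2]⟩).hasDerivAt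
    (Icc_mem_nhds (by linarith [ht.1]) (by linarith [ht.2]))⟩

section SqGap

/-- The truncated difference `max (c² - y²) 0`. It replaces the quadratic nonlinearity `c² - y²` of
the Riccati equation; the truncation makes the equation globally Lipschitz with bounded right-hand
side, so that solutions cannot blow up. -/
noncomputable def sqGap (c y : ℝ) : ℝ := max (c ^ 2 - y ^ 2) 0

variable {c y : ℝ}

lemma sqGap_nonneg (c y : ℝ) : 0 ≤ sqGap c y := le_max_right _ _

lemma sub_sq_le_sqGap (c y : ℝ) : c ^ 2 - y ^ 2 ≤ sqGap c y := le_max_left _ _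

lemma sqGap_le (c y : ℝ) : sqGap c y ≤ c ^ 2 :=
  max_le (sub_le_self _ (sq_nonneg y)) (sq_nonneg c)

lemma sqGap_zero_right (c : ℝ) : sqGap c 0 = c ^ 2 := by
  simp [sqGap, sq_nonneg]

lemma sqGap_neg (c y : ℝ) : sqGap c (-y) = sqGap c y := by
  rw [sqGap, neg_sq, sqGap]

lemma sqGap_of_abs_le (h : |y| ≤ |c|) : sqGap c y = c ^ 2 - y ^ 2 :=
  max_eq_left (sub_nonneg.2 (sq_le_sq.2 h))

lemma sqGap_of_le_abs (h : |c| ≤ |y|) : sqGap c y = 0 :=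
  max_eq_right (sub_nonpos.2 (sq_le_sq.2 h))

@[fun_prop]
lemma continuous_sqGap (c : ℝ) : Continuous (sqGap c) := by
  unfold sqGap
  fun_prop

lemma sqGap_eq_sub_sq_min (hc : 0 ≤ c) (y : ℝ) : sqGap c y = c ^ 2 - min |y| c ^ 2 := by
  rcases le_total |y| c with h | h
  · rw [min_eq_left h, sq_abs, sqGap_of_abs_le (h.trans (le_abs_self c))]
  · rw [min_eq_right h, sub_self, sqGap_of_le_abs (by rwa [abs_of_nonneg hc])]

lemma lipschitzWith_sqGap (c : ℝ≥0) : LipschitzWith (2 * c) (sqGap c) := by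
  refine .of_dist_le_mul fun x y => ?_
  have abs_min_sub_min : |min |y| (c : ℝ) - min |x| c| ≤ |x - y| := by
    have h := abs_min_sub_min_le_max |y| (c : ℝ) |x| c
    rw [sub_self, abs_zero, max_eq_left (abs_nonneg _)] at h
    exact h.trans ((abs_abs_sub_abs_le_abs_sub y x).trans_eq (abs_sub_comm y x))
  have abs_min_add_min : |min |y| (c : ℝ) + min |x| c| ≤ 2 * c := by
    rw [abs_of_nonneg (by positivity)]
    linarith [min_le_right |y| (c : ℝ), min_le_right |x| (c : ℝ)]
  calc dist (sqGap c x) (sqGap c y)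
      = |min |y| (c : ℝ) + min |x| c| * |min |y| (c : ℝ) - min |x| c| := by
        rw [dist_eq, sqGap_eq_sub_sq_min c.coe_nonneg, sqGap_eq_sub_sq_min c.coe_nonneg, ← abs_mul]
        ring_nf
    _ ≤ 2 * c * |x - y| := by gcongr

end SqGap

section Cutoff

/-- The truncation `min h⁺ (n · dist(x, Uᶜ))` of `h` on an open set `U`. It vanishes off `U`, and
if `h` is continuous and nonnegative on `U`, these functions are continuous on the whole line and
increase to `h` on `U` as `n → ∞`. -/
noncomputable def cutoff (U : Set ℝ) (h : ℝ → ℝ) (n : ℕ) (x : ℝ) : ℝ :=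
  min (max (h x) 0) (n * Metric.infDist x Uᶜ)

variable {U : Set ℝ} {h : ℝ → ℝ}

lemma cutoff_nonneg (U : Set ℝ) (h : ℝ → ℝ) (n : ℕ) (x : ℝ) : 0 ≤ cutoff U h n x :=
  le_min (le_max_right _ _) (mul_nonneg n.cast_nonneg Metric.infDist_nonneg)

lemma cutoff_le_mul_infDist (U : Set ℝ) (h : ℝ → ℝ) (n : ℕ) (x : ℝ) :
    cutoff U h n x ≤ n * Metric.infDist x Uᶜ :=
  min_le_right _ _

lemma cutoff_le {n : ℕ} {x : ℝ} (hx : 0 ≤ h x) : cutoff U h n x ≤ h x :=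
  (min_le_left _ _).trans_eq (max_eq_left hx)

lemma cutoff_mono (U : Set ℝ) (h : ℝ → ℝ) (x : ℝ) : Monotone (cutoff U h · x) := fun m n hmn =>
  min_le_min_left _ (by gcongr; exact Metric.infDist_nonneg)

lemma infDist_compl_pos (hU : IsOpen U) (hne : Uᶜ.Nonempty) {x : ℝ} (hx : x ∈ U) :
    0 < Metric.infDist x Uᶜ :=
  (hU.isClosed_compl.notMem_iff_infDist_pos hne).1 (not_not.2 hx)

lemma cutoff_pos (hU : IsOpen U) (hne : Uᶜ.Nonempty) {n : ℕ} (hn : n ≠ 0) {x : ℝ} (hx : x ∈ U)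
    (hhx : 0 < h x) : 0 < cutoff U h n x :=
  lt_min (lt_max_of_lt_left hhx)
    (mul_pos (Nat.cast_pos.2 (Nat.pos_of_ne_zero hn)) (infDist_compl_pos hU hne hx))

lemma tendsto_cutoff (hU : IsOpen U) (hne : Uᶜ.Nonempty) {x : ℝ} (hx : x ∈ U) (hhx : 0 ≤ h x) :
    Tendsto (cutoff U h · x) atTop (𝓝 (h x)) := by
  refine tendsto_const_nhds.congr' ?_
  filter_upwards [(tendsto_natCast_atTop_atTop.atTop_mul_const
    (infDist_compl_pos hU hne hx)).eventually_ge_atTop (h x)] with n hn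
  rw [cutoff, max_eq_left hhx, min_eq_left hn]

lemma continuous_cutoff (hU : IsOpen U) (hh : ContinuousOn h U) (n : ℕ) :
    Continuous (cutoff U h n) := by
  have dist_cont : Continuous fun x => n * Metric.infDist x Uᶜ :=
    (Metric.continuous_infDist_pt _).const_mul _
  refine continuous_iff_continuousAt.2 fun x => ?_
  by_cases hx : x ∈ U
  · exact ((hh.continuousAt (hU.mem_nhds hx)).max continuousAt_const).min dist_cont.continuousAt
  · have infDist_zero : n * Metric.infDist x Uᶜ = 0 := by
      rw [Metric.infDist_zero_of_mem hx, mul_zero]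
    have cutoff_zero : cutoff U h n x = 0 :=
      le_antisymm (infDist_zero ▸ cutoff_le_mul_infDist U h n x) (cutoff_nonneg U h n x)
    rw [ContinuousAt, cutoff_zero]
    exact squeeze_zero (cutoff_nonneg U h n) (cutoff_le_mul_infDist U h n)
      (infDist_zero ▸ dist_cont.tendsto x)

lemma cutoff_Ioo_le {a b : ℝ} (hab : a ≤ b) (h : ℝ → ℝ) (n : ℕ) (x : ℝ) :
    cutoff (Ioo a b) h n x ≤ n * (b - a) := by
  refine (cutoff_le_mul_infDist _ h n x).trans (mul_le_mul_of_nonneg_left ?_ n.cast_nonneg)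
  by_cases hx : x ∈ Ioo a b
  · refine (Metric.infDist_le_dist_of_mem (y := a) left_notMem_Ioo).trans ?_
    rw [dist_eq, abs_of_pos (sub_pos.2 hx.1)]
    linarith [hx.2]
  · exact (Metric.infDist_zero_of_mem hx).trans_le (sub_nonneg.2 hab)

end Cutoff

section Riccati

/-- The right-hand side `(c² - y²)⁺ H(x) - κ` of the truncated Riccati equation. If
`-(G f')' + (c² / G) f = κ f`, then `w = G f' / f` satisfies `w' = (c² - w²) / G - κ`, which is this
equation with `H = 1 / G` as long as `|w| ≤ c`. -/
noncomputable def riccatiField (c κ : ℝ) (H : ℝ → ℝ) (x y : ℝ) : ℝ := sqGap c y * H x - κ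

/-- `w` solves the truncated Riccati equation at every point of `s`. -/
def IsRiccatiSol (c κ : ℝ) (H w : ℝ → ℝ) (s : Set ℝ) : Prop :=
  ∀ x ∈ s, HasDerivAt w (riccatiField c κ H x (w x)) x

/-- `w` is a subsolution of the truncated Riccati equation at every point of `s`. -/
def IsRiccatiSubsol (c κ : ℝ) (H w : ℝ → ℝ) (s : Set ℝ) : Prop :=
  ∀ x ∈ s, DifferentiableAt ℝ w x ∧ deriv w x ≤ riccatiField c κ H x (w x)

variable {a b c κ L : ℝ} {H h w v : ℝ → ℝ} {s t : Set ℝ}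

lemma IsRiccatiSol.mono (hw : IsRiccatiSol c κ H w s) (hts : t ⊆ s) : IsRiccatiSol c κ H w t :=
  fun x hx => hw x (hts hx)

lemma IsRiccatiSol.isRiccatiSubsol (hw : IsRiccatiSol c κ H w s) : IsRiccatiSubsol c κ H w s :=
  fun x hx => ⟨(hw x hx).differentiableAt, (hw x hx).deriv.le⟩

lemma IsRiccatiSol.continuousOn (hw : IsRiccatiSol c κ H w s) : ContinuousOn w s :=
  HasDerivAt.continuousOn hw

lemma riccatiField_sub_le (hc : 0 ≤ c) {x : ℝ} (hH : H x ∈ Icc 0 L) (y z : ℝ) :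
    riccatiField c κ H x y - riccatiField c κ H x z ≤ 2 * c * L * |y - z| := by
  lift c to ℝ≥0 using hc
  have sqGap_sub_le : sqGap c y - sqGap c z ≤ 2 * c * |y - z| :=
    (le_abs_self _).trans ((lipschitzWith_sqGap c).dist_le_mul y z)
  calc riccatiField c κ H x y - riccatiField c κ H x z
      = (sqGap c y - sqGap c z) * H x := by simp only [riccatiField]; ring
    _ ≤ 2 * c * |y - z| * H x := mul_le_mul_of_nonneg_right sqGap_sub_le hH.1
    _ ≤ 2 * c * |y - z| * L := mul_le_mul_of_nonneg_left hH.2 (by positivity)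
    _ = 2 * c * L * |y - z| := by ring

lemma exists_isRiccatiSol (hab : a ≤ b) (hc : 0 ≤ c) (κ : ℝ) (hH : Continuous H)
    (hHL : ∀ x, H x ∈ Icc 0 L) (y₀ : ℝ) :
    ∃ w, w a = y₀ ∧ IsRiccatiSol c κ H w (Icc a b) := by
  have hL : 0 ≤ L := (hHL 0).1.trans (hHL 0).2
  refine exists_forall_mem_Icc_hasDerivAt_of_lipschitzWith (v := riccatiField c κ H)
    (K := (2 * c * L).toNNReal) (C := (c ^ 2 * L + |κ|).toNNReal) hab
    (fun x => LipschitzWith.of_le_add_mul _ fun y z => ?_)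
    (fun y => (hH.const_mul (sqGap c y)).sub continuous_const) (fun x y => ?_) y₀
  · rw [coe_toNNReal _ (by positivity), dist_eq]
    linarith [riccatiField_sub_le (κ := κ) hc (hHL x) y z]
  · rw [coe_toNNReal _ (by positivity)]
    refine (norm_sub_le _ _).trans (add_le_add_left ?_ |κ|)
    rw [norm_of_nonneg (mul_nonneg (sqGap_nonneg c y) (hHL x).1)]
    exact mul_le_mul (sqGap_le c y) (hHL x).2 (hHL x).1 (sq_nonneg c)

lemma IsRiccatiSol.monotoneOn_add_mul (hw : IsRiccatiSol c κ H w s) (hs : Convex ℝ s)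
    (hH : ∀ x ∈ s, 0 ≤ H x) : MonotoneOn (fun x => w x + κ * x) s := by
  have hderiv : ∀ x ∈ s, HasDerivAt (fun x => w x + κ * x) (sqGap c (w x) * H x) x :=
    fun x hx => by simpa [riccatiField] using (hw x hx).fun_add ((hasDerivAt_id x).const_mul κ)
  refine monotoneOn_of_hasDerivWithinAt_nonneg hs (HasDerivAt.continuousOn hderiv)
    (fun x hx => (hderiv x (interior_subset hx)).hasDerivWithinAt)
    fun x hx => mul_nonneg (sqGap_nonneg _ _) (hH x (interior_subset hx))

lemma IsRiccatiSubsol.le_of_riccatiField_le_deriv (hw : IsRiccatiSubsol c κ H w (Icc a b))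
    (hv : ∀ x ∈ Icc a b, DifferentiableAt ℝ v x)
    (hv' : ∀ x ∈ Icc a b, riccatiField c κ H x (v x) ≤ deriv v x) (hc : 0 ≤ c)
    (hH : ∀ x ∈ Icc a b, H x ∈ Icc 0 L) (ha : w a ≤ v a) {x : ℝ} (hx : x ∈ Icc a b) :
    w x ≤ v x := by
  refine sub_nonpos.1 (nonpos_of_deriv_le_mul_of_pos (d := fun x => w x - v x) (K := 2 * c * L)
    (fun y hy => (hw y hy).1.sub (hv y hy)) (sub_nonpos.2 ha) (fun y hy hpos => ?_) hx)
  rw [deriv_fun_sub (hw y hy).1 (hv y hy)]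
  have := riccatiField_sub_le (κ := κ) hc (hH y hy) (w y) (v y)
  rw [abs_of_pos hpos] at this
  linarith [(hw y hy).2, hv' y hy]

lemma IsRiccatiSubsol.le_of_abs_le_abs (hw : IsRiccatiSubsol c κ H w (Icc a b)) (hc : 0 ≤ c)
    (hκ : 0 ≤ κ) (hH : ∀ x ∈ Icc a b, H x ∈ Icc 0 L) {y₀ : ℝ} (hy₀ : |c| ≤ |y₀|) (ha : w a ≤ y₀)
    {x : ℝ} (hx : x ∈ Icc a b) : w x ≤ y₀ :=
  hw.le_of_riccatiField_le_deriv (v := fun _ => y₀) (fun _ _ => differentiableAt_const y₀)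
    (fun y _ => by simp [riccatiField, sqGap_of_le_abs hy₀, hκ]) hc hH ha hx

lemma IsRiccatiSubsol.abs_le_of_pos (hw : IsRiccatiSubsol c κ H w (Icc a b)) (hc : 0 ≤ c)
    (hκ : 0 ≤ κ) (hH : ∀ x ∈ Icc a b, H x ∈ Icc 0 L) (ha : w a ≤ c) (hb : 0 < w b) {x : ℝ}
    (hx : x ∈ Icc a b) : |w x| ≤ c := by
  refine abs_le.2 ⟨?_, hw.le_of_abs_le_abs hc hκ hH le_rfl ha hx⟩
  by_contra! hlt
  have hsub : Icc x b ⊆ Icc a b := Icc_subset_Icc_left hx.1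
  have : w b ≤ -c := IsRiccatiSubsol.le_of_abs_le_abs (fun y hy => hw y (hsub hy)) hc hκ
    (fun y hy => hH y (hsub hy)) (abs_neg c).ge hlt.le (right_mem_Icc.2 hx.2)
  linarith

lemma IsRiccatiSol.le_of_le {H' : ℝ → ℝ} (hw : IsRiccatiSol c κ H w (Icc a b))
    (hv : IsRiccatiSol c κ H' v (Icc a b)) (hc : 0 ≤ c) (hH : ∀ x ∈ Icc a b, H x ∈ Icc 0 L)
    (hHH' : ∀ x ∈ Icc a b, H x ≤ H' x) (ha : w a ≤ v a) {x : ℝ} (hx : x ∈ Icc a b) :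
    w x ≤ v x := by
  refine hw.isRiccatiSubsol.le_of_riccatiField_le_deriv
    (fun y hy => (hv y hy).differentiableAt) (fun y hy => ?_) hc hH ha hx
  rw [(hv y hy).deriv]
  exact sub_le_sub_right (mul_le_mul_of_nonneg_left (hHH' y hy) (sqGap_nonneg _ _)) κ

-- The perturbation `δ (x - a) e^{K (x - a)}` absorbs the Lipschitz constant `K` of the field, so
-- the equation can afford to lose an additional `δ` on the right-hand side.
lemma IsRiccatiSol.exists_isRiccatiSubsol_of_pos (hw : IsRiccatiSol c κ H w (Icc a b))
    (hab : a < b) (hc : 0 ≤ c) (hH : ∀ x ∈ Icc a b, H x ∈ Icc 0 L) (hb : 0 < w b) :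
    ∃ κ' > κ, ∃ v, v a = w a ∧ 0 < v b ∧ IsRiccatiSubsol c κ' H v (Icc a b) := by
  have hL : 0 ≤ L := (hH a (left_mem_Icc.2 hab.le)).1.trans (hH a (left_mem_Icc.2 hab.le)).2
  set K := 2 * c * L
  have hK : 0 ≤ K := by positivity
  set P : ℝ → ℝ := fun x => (x - a) * exp (K * (x - a))
  have hPb : 0 < P b := mul_pos (sub_pos.2 hab) (exp_pos _)
  have hP : ∀ x, HasDerivAt P (exp (K * (x - a)) + K * P x) x := fun x => by
    refine (((hasDerivAt_id' x).sub_const a).fun_mul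
      (((hasDerivAt_id' x).sub_const a).const_mul K).exp).congr_deriv ?_
    simp only [P]
    ring
  obtain ⟨δ, hδ, hδb⟩ : ∃ δ > 0, δ * P b < w b :=
    ⟨w b / 2 / P b, by positivity, by rw [div_mul_cancel₀ _ hPb.ne']; linarith⟩
  refine ⟨κ + δ, by linarith, fun x => w x - δ * P x, by simp [P], sub_pos.2 hδb,
    fun x hx => ?_⟩
  have hderiv := (hw x hx).sub ((hP x).const_mul δ)
  refine ⟨hderiv.differentiableAt, hderiv.deriv.trans_le ?_⟩
  have hPx : 0 ≤ δ * P x :=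
    mul_nonneg hδ.le (mul_nonneg (sub_nonneg.2 hx.1) (exp_pos _).le)
  have field_sub_le := riccatiField_sub_le (κ := κ) hc (hH x hx) (w x) (w x - δ * P x)
  rw [sub_sub_cancel, abs_of_nonneg hPx] at field_sub_le
  have one_le_exp : δ * 1 ≤ δ * exp (K * (x - a)) :=
    mul_le_mul_of_nonneg_left (one_le_exp (mul_nonneg hK (sub_nonneg.2 hx.1))) hδ.le
  simp only [riccatiField] at field_sub_le ⊢
  linarith

lemma IsRiccatiSol.pos_of_eq_zero (hw : IsRiccatiSol c 0 H w (Icc a b)) (hc : c ≠ 0)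
    (hH : ∀ x ∈ Icc a b, 0 ≤ H x) (ha : w a = 0) {x : ℝ} (hx : x ∈ Ioo a b) (hHx : 0 < H x) :
    0 < w b := by
  have hmono : MonotoneOn w (Icc a b) := by
    simpa using hw.monotoneOn_add_mul (convex_Icc a b) hH
  have hab : a ≤ b := hx.1.le.trans hx.2.le
  by_contra! hb
  have eq_zero : ∀ y ∈ Icc a b, w y = 0 := fun y hy => le_antisymm
    ((hmono hy (right_mem_Icc.2 hab) hy.2).trans hb) (ha ▸ hmono (left_mem_Icc.2 hab) hy hy.1)
  have deriv_zero : HasDerivAt w 0 x := (hasDerivAt_const x 0).congr_of_eventuallyEq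
    (eventually_of_mem (Icc_mem_nhds hx.1 hx.2) eq_zero)
  have hxI := Ioo_subset_Icc_self hx
  have : c ^ 2 * H x = 0 := by
    simpa [riccatiField, eq_zero x hxI, sqGap_zero_right] using (hw x hxI).unique deriv_zero
  exact (mul_pos (by positivity) hHx).ne' this

lemma isRiccatiSol_of_tendsto {Hn W : ℕ → ℝ → ℝ} (hs : IsOpen s)
    (hHn : ∀ n, ContinuousOn (Hn n) s) (hh : ContinuousOn h s)
    (hHnh : ∀ n, ∀ x ∈ s, Hn n x ∈ Icc 0 (h x)) (hW : ∀ n, IsRiccatiSol c κ (Hn n) (W n) s)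
    (hHlim : ∀ x ∈ s, Tendsto (Hn · x) atTop (𝓝 (h x)))
    (hWlim : ∀ x ∈ s, Tendsto (W · x) atTop (𝓝 (w x))) : IsRiccatiSol c κ h w s := by
  have field_cont : ∀ {H w : ℝ → ℝ}, ContinuousOn H s → ContinuousOn w s →
      ContinuousOn (fun x => riccatiField c κ H x (w x)) s := fun hH hw =>
    (((continuous_sqGap c).comp_continuousOn hw).mul hH).sub continuousOn_const
  have hβ : ContinuousOn (fun x => c ^ 2 * h x + |κ|) s :=
    (hh.const_smul (c ^ 2)).add continuousOn_const
  have field_le : ∀ n, ∀ x ∈ s, ‖riccatiField c κ (Hn n) x (W n x)‖ ≤ c ^ 2 * h x + |κ| := by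
    intro n x hx
    refine (norm_sub_le _ _).trans (add_le_add_left ?_ |κ|)
    rw [norm_of_nonneg (mul_nonneg (sqGap_nonneg _ _) (hHnh n x hx).1)]
    exact mul_le_mul (sqGap_le _ _) (hHnh n x hx).2 (hHnh n x hx).1 (sq_nonneg c)
  have field_lim : ∀ x ∈ s, Tendsto (fun n => riccatiField c κ (Hn n) x (W n x)) atTop
      (𝓝 (riccatiField c κ h x (w x))) := fun x hx =>
    ((((continuous_sqGap c).tendsto _).comp (hWlim x hx)).mul (hHlim x hx)).sub_const κ
  have W'_cont := fun n => field_cont (hHn n) (hW n).continuousOn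
  have w_cont := continuousOn_of_tendsto_of_dominated hs hW W'_cont hβ field_le hWlim field_lim
  exact fun x hx => hasDerivAt_of_tendsto_of_dominated hs hW W'_cont hβ field_le hWlim field_lim
    (field_cont hh w_cont) hx

lemma exists_isRiccatiSol_Ioo (hab : a < b) (hc : 0 ≤ c) (hh : ContinuousOn h (Ioo a b))
    (hh₀ : ∀ x ∈ Ioo a b, 0 ≤ h x)
    (hend : ∀ n W, W a = 0 → IsRiccatiSol c κ (cutoff (Ioo a b) h n) W (Icc a b) → W b ≤ 0) :
    ∃ w, IsRiccatiSol c κ h w (Ioo a b) ∧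
      ∀ x ∈ Ioo a b, -(κ * (x - a)) ≤ w x ∧ w x ≤ κ * (b - x) := by
  have hne : (Ioo a b)ᶜ.Nonempty := ⟨a, left_notMem_Ioo⟩
  have cutoff_mem : ∀ (n : ℕ) x, cutoff (Ioo a b) h n x ∈ Icc 0 (n * (b - a)) := fun n x =>
    ⟨cutoff_nonneg _ _ _ _, cutoff_Ioo_le hab.le h n x⟩
  choose W hWa hW using fun n => exists_isRiccatiSol hab.le hc κ
    (continuous_cutoff isOpen_Ioo hh n) (cutoff_mem n) 0
  have add_mul_mono := fun n => (hW n).monotoneOn_add_mul (convex_Icc a b)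
    fun x _ => cutoff_nonneg _ _ n x
  have le_W : ∀ n, ∀ x ∈ Icc a b, -(κ * (x - a)) ≤ W n x := fun n x hx => by
    linarith [add_mul_mono n (left_mem_Icc.2 hab.le) hx hx.1, hWa n]
  have W_le : ∀ n, ∀ x ∈ Icc a b, W n x ≤ κ * (b - x) := fun n x hx => by
    linarith [add_mul_mono n hx (right_mem_Icc.2 hab.le) hx.2, hend n (W n) (hWa n) (hW n)]
  have W_mono : ∀ x ∈ Icc a b, Monotone (W · x) := fun x hx m n hmn =>
    (hW m).le_of_le (hW n) hc (fun y _ => cutoff_mem m y) (fun y _ => cutoff_mono _ _ y hmn)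
      ((hWa m).trans (hWa n).symm).le hx
  have W_lim : ∀ x ∈ Icc a b, Tendsto (W · x) atTop (𝓝 (⨆ n, W n x)) := fun x hx =>
    tendsto_atTop_ciSup (W_mono x hx) ⟨_, forall_mem_range.2 fun n => W_le n x hx⟩
  refine ⟨fun x => ⨆ n, W n x, ?_, fun x hx => ?_⟩
  · exact isRiccatiSol_of_tendsto isOpen_Ioo
      (fun n => (continuous_cutoff isOpen_Ioo hh n).continuousOn) hh
      (fun n x hx => ⟨cutoff_nonneg _ _ n x, cutoff_le (hh₀ x hx)⟩)
      (fun n => (hW n).mono Ioo_subset_Icc_self)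
      (fun x hx => tendsto_cutoff isOpen_Ioo hne hx (hh₀ x hx))
      (fun x hx => W_lim x (Ioo_subset_Icc_self hx))
  · have hx := Ioo_subset_Icc_self hx
    exact ⟨ge_of_tendsto' (W_lim x hx) (le_W · x hx), le_of_tendsto' (W_lim x hx) (W_le · x hx)⟩

end Riccati

section LowerBound

variable {M ν κ L : ℝ} {G H f w : ℝ → ℝ}

lemma rayleigh_eq (M ν : ℝ) (G f : ℝ → ℝ) : rayleigh M ν G f =
    (∫ a in Ioo 0 M, (G a * deriv f a ^ 2 + (2 * π * ν) ^ 2 * f a ^ 2 / G a)) /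
      ∫ a in Ioo 0 M, f a ^ 2 := by
  rw [rayleigh, show (2 * π * ν) ^ 2 = 4 * π ^ 2 * ν ^ 2 by ring]

lemma Admissible.integrableOn_energy (hf : Admissible M G f) (c : ℝ) :
    IntegrableOn (fun a => G a * deriv f a ^ 2 + c ^ 2 * f a ^ 2 / G a) (Ioo 0 M) := by
  obtain ⟨_, _, _, _, hderiv, hdiv⟩ := hf
  simpa only [mul_div_assoc, Pi.add_def] using hderiv.add (hdiv.const_mul (c ^ 2))

lemma Admissible.integral_sq_pos (hf : Admissible M G f) : 0 < ∫ a in Ioo 0 M, f a ^ 2 := by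
  obtain ⟨_, hne, _, hsq, _, _⟩ := hf
  refine (integral_nonneg fun a => sq_nonneg _).lt_of_ne fun h => hne ?_
  filter_upwards [(integral_eq_zero_iff_of_nonneg (fun a => sq_nonneg (f a)) hsq).1 h.symm]
    with a ha using by simpa using ha

lemma exists_admissible (hM : 0 < M) (hG : ContinuousOn G (Ioo 0 M))
    (hG₀ : ∀ a ∈ Ioo 0 M, 0 < G a) : ∃ f, Admissible M G f := by
  have hmid : M / 2 ∈ Ioo 0 M := ⟨by linarith, by linarith⟩
  obtain ⟨f, hsupp, hcpt, hf, -, hf_mid⟩ :=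
    exists_contDiff_tsupport_subset (n := 1) (isOpen_Ioo.mem_nhds hmid)
  have integrableOn_of_tsupport {F : ℝ → ℝ} (hF : ContinuousOn F (Ioo 0 M))
      (hFf : tsupport F ⊆ tsupport f) : IntegrableOn F (Ioo 0 M) :=
    ((continuous_of_tsupport fun x hx =>
      hF.continuousAt (isOpen_Ioo.mem_nhds (hsupp (hFf hx)))).integrable_of_hasCompactSupport
      (hcpt.mono' ((subset_tsupport F).trans hFf))).integrableOn
  have hf' := hf.continuous_deriv le_rfl
  refine ⟨f, hf.continuous.measurable, fun hae => ?_, fun a _ => hf.differentiable one_ne_zero a,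
    integrableOn_of_tsupport (hf.continuous.pow 2).continuousOn ?_,
    integrableOn_of_tsupport (hG.mul (hf'.pow 2).continuousOn) ?_,
    integrableOn_of_tsupport
      ((hf.continuous.pow 2).continuousOn.div hG fun x hx => (hG₀ x hx).ne') ?_⟩
  · have := Measure.eqOn_open_of_ae_eq hae isOpen_Ioo hf.continuous.continuousOn
      continuousOn_const hmid
    simp [hf_mid] at this
  · exact closure_mono fun x => by simp
  · exact (closure_mono fun x => by simp +contextual).trans (tsupport_deriv_subset)
  · exact closure_mono fun x => by simp +contextual

lemma rayleigh_nonneg (hG₀ : ∀ a ∈ Ioo 0 M, 0 < G a) (f : ℝ → ℝ) : 0 ≤ rayleigh M ν G f :=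
  div_nonneg (setIntegral_nonneg measurableSet_Ioo fun a ha => by have := hG₀ a ha; positivity)
    (integral_nonneg fun a => sq_nonneg _)

lemma kappa1_le_rayleigh (hG₀ : ∀ a ∈ Ioo 0 M, 0 < G a) (hf : Admissible M G f) :
    kappa1 M ν G ≤ rayleigh M ν G f :=
  csInf_le ⟨0, by rintro _ ⟨g, -, rfl⟩; exact rayleigh_nonneg hG₀ g⟩ ⟨f, hf, rfl⟩

lemma picone_le {g κ c w w' f f' : ℝ} (hg : 0 < g) (hw' : w' ≤ (c ^ 2 - w ^ 2) / g - κ) :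
    w' * f ^ 2 + w * (2 * f * f') ≤ g * f' ^ 2 + c ^ 2 * f ^ 2 / g - κ * f ^ 2 := by
  have square : 0 ≤ (g * f' - w * f) ^ 2 / g := by positivity
  have expand : (g * f' - w * f) ^ 2 / g
      = g * f' ^ 2 + c ^ 2 * f ^ 2 / g - κ * f ^ 2
        - (((c ^ 2 - w ^ 2) / g - κ) * f ^ 2 + w * (2 * f * f')) := by
    field_simp
    ring
  linarith [mul_le_mul_of_nonneg_right hw' (sq_nonneg f)]

lemma IsRiccatiSubsol.le_rayleigh (hM : 0 < M) (hG₀ : ∀ a ∈ Ioo 0 M, 0 < G a)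
    (hHG : ∀ a ∈ Ioo 0 M, H a ≤ (G a)⁻¹)
    (hw : IsRiccatiSubsol (2 * π * ν) κ H w (Icc 0 M)) (hw₀ : w 0 = 0) (hwM : 0 < w M)
    (hwc : ∀ a ∈ Icc 0 M, |w a| ≤ 2 * π * ν) (hf : Admissible M G f) :
    κ ≤ rayleigh M ν G f := by
  have hf_energy := hf.integrableOn_energy (2 * π * ν)
  have hf_pos := hf.integral_sq_pos
  obtain ⟨_, _, hf_diff, hf_sq, _, _⟩ := hf
  rw [rayleigh_eq, le_div_iff₀ hf_pos, ← sub_nonneg, ← integral_const_mul,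
    ← integral_sub hf_energy (hf_sq.const_mul κ)]
  have hderiv : ∀ a ∈ Ioo 0 M, HasDerivAt (fun x => w x * f x ^ 2)
      (deriv w a * f a ^ 2 + w a * (2 * f a * deriv f a)) a := fun a ha => by
    simpa using (hw a (Ioo_subset_Icc_self ha)).1.hasDerivAt.fun_mul
      ((hf_diff a ha).hasDerivAt.pow 2)
  refine integral_nonneg_of_deriv_le hM (fun a ha => (hderiv a ha).differentiableAt)
    (hf_energy.sub (hf_sq.const_mul κ)) (fun a ha => ?_) (fun ε hε => ?_) (fun ε hε => ?_)
  · have ha' := Ioo_subset_Icc_self ha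
    have hw' : deriv w a ≤ ((2 * π * ν) ^ 2 - w a ^ 2) / G a - κ := by
      refine (hw a ha').2.trans (sub_le_sub_right ?_ κ)
      rw [sqGap_of_abs_le ((hwc a ha').trans (le_abs_self _)), div_eq_mul_inv]
      exact mul_le_mul_of_nonneg_left (hHG a ha)
        (sub_nonneg.2 (sq_le_sq.2 ((hwc a ha').trans (le_abs_self _))))
    exact (hderiv a ha).deriv.trans_le (picone_le (hG₀ a ha) hw')
  · exact frequently_mul_lt_of_differentiableAt hM (hw 0 (left_mem_Icc.2 hM.le)).1 hw₀ hf_sq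
      (fun x => sq_nonneg _) hε
  · have w_pos : ∀ᶠ x in 𝓝[<] M, 0 < w x :=
      ((hw M (right_mem_Icc.2 hM.le)).1.continuousAt.eventually_const_lt hwM).filter_mono
        nhdsWithin_le_nhds
    exact (w_pos.mono fun x hx => (neg_lt_zero.2 hε).trans_le (by positivity)).frequently

lemma IsRiccatiSol.lt_kappa1 (hM : 0 < M) (hν : 0 ≤ ν) (hκ : 0 ≤ κ)
    (hG : ContinuousOn G (Ioo 0 M)) (hG₀ : ∀ a ∈ Ioo 0 M, 0 < G a)
    (hHG : ∀ a ∈ Ioo 0 M, H a ≤ (G a)⁻¹) (hHL : ∀ a ∈ Icc 0 M, H a ∈ Icc 0 L)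
    (hw : IsRiccatiSol (2 * π * ν) κ H w (Icc 0 M)) (hw₀ : w 0 = 0) (hwM : 0 < w M) :
    κ < kappa1 M ν G := by
  have hc : 0 ≤ 2 * π * ν := by positivity
  obtain ⟨κ', hκ', v, hv₀, hvM, hv⟩ := hw.exists_isRiccatiSubsol_of_pos hM hc hHL hwM
  rw [hw₀] at hv₀
  obtain ⟨f, hf⟩ := exists_admissible hM hG hG₀
  refine hκ'.trans_le (le_csInf ⟨_, f, hf, rfl⟩ ?_)
  rintro _ ⟨g, hg, rfl⟩
  exact hv.le_rayleigh hM hG₀ hHG hv₀ hvM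
    (fun a ha => hv.abs_le_of_pos hc (hκ.trans hκ'.le) hHL (hv₀.trans_le hc) hvM ha) hg

lemma kappa1_pos (hM : 0 < M) (hν : 0 < ν) (hG : ContinuousOn G (Ioo 0 M))
    (hG₀ : ∀ a ∈ Ioo 0 M, 0 < G a) : 0 < kappa1 M ν G := by
  have hinv_pos : ∀ a ∈ Ioo 0 M, 0 < (G a)⁻¹ := fun a ha => inv_pos.2 (hG₀ a ha)
  have hinv : ContinuousOn G⁻¹ (Ioo 0 M) := hG.inv₀ fun a ha => (hG₀ a ha).ne'
  have cutoff_mem : ∀ a, cutoff (Ioo 0 M) G⁻¹ 1 a ∈ Icc 0 ((1 : ℕ) * (M - 0)) :=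
    fun a => ⟨cutoff_nonneg _ _ _ a, cutoff_Ioo_le hM.le _ 1 a⟩
  obtain ⟨w, hw₀, hw⟩ := exists_isRiccatiSol hM.le (c := 2 * π * ν) (by positivity) 0
    (continuous_cutoff isOpen_Ioo hinv 1) cutoff_mem 0
  have hmid : M / 2 ∈ Ioo 0 M := ⟨by linarith, by linarith⟩
  refine hw.lt_kappa1 hM hν.le le_rfl hG hG₀ (fun a ha => cutoff_le (h := G⁻¹) (hinv_pos a ha).le)
    (fun a _ => cutoff_mem a) hw₀ ?_
  exact hw.pos_of_eq_zero (by positivity) (fun a _ => (cutoff_mem a).1) hw₀ hmid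
    (cutoff_pos isOpen_Ioo ⟨0, left_notMem_Ioo⟩ one_ne_zero hmid (hinv_pos _ hmid))

lemma exists_isRiccatiSol_kappa1 (hM : 0 < M) (hν : 0 < ν) (hG : ContinuousOn G (Ioo 0 M))
    (hG₀ : ∀ a ∈ Ioo 0 M, 0 < G a) :
    ∃ w, IsRiccatiSol (2 * π * ν) (kappa1 M ν G) G⁻¹ w (Ioo 0 M) ∧
      ∀ a ∈ Ioo 0 M, -(kappa1 M ν G * a) ≤ w a ∧ w a ≤ kappa1 M ν G * (M - a) := by
  have hinv_nonneg : ∀ a ∈ Ioo 0 M, 0 ≤ (G a)⁻¹ := fun a ha => inv_nonneg.2 (hG₀ a ha).le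
  simpa only [sub_zero] using exists_isRiccatiSol_Ioo hM (by positivity)
    (hG.inv₀ fun a ha => (hG₀ a ha).ne') hinv_nonneg fun n W hW₀ hW => not_lt.1 fun hWM =>
      (hW.lt_kappa1 hM hν.le (kappa1_pos hM hν hG hG₀).le hG hG₀
        (fun a ha => cutoff_le (h := G⁻¹) (hinv_nonneg a ha))
        (fun a _ => ⟨cutoff_nonneg _ _ _ a, cutoff_Ioo_le hM.le _ n a⟩) hW₀ hWM).false

end LowerBound

section TestFunction

/-- A primitive of `w / G` on `(0, M)`. If `w` solves the Riccati equation of the weight `G`, then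
its exponential solves the corresponding second-order equation. -/
noncomputable def riccatiExponent (M : ℝ) (w G : ℝ → ℝ) (x : ℝ) : ℝ := ∫ t in (M / 2)..x, w t / G t

/-- The function `f` on `(0, M)` with `f' = (w / G) f` and `f (M / 2) = 1`, extended by zero. -/
noncomputable def riccatiTest (M : ℝ) (w G : ℝ → ℝ) : ℝ → ℝ :=
  (Ioo 0 M).indicator fun x => exp (riccatiExponent M w G x)

/-- For `f = riccatiTest M w G₂` and `w` a solution of the Riccati equation of `G₁`, this is the
density `N` in `(w f²)' = N - κ f²`; for `G₁ ≤ G₂` it dominates the energy density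
`G₂ f'² + c² f² / G₂` of `f`. -/
noncomputable def riccatiEnergy (M c : ℝ) (w G₁ G₂ : ℝ → ℝ) (x : ℝ) : ℝ :=
  (sqGap c (w x) / G₁ x + 2 * w x ^ 2 / G₂ x) * riccatiTest M w G₂ x ^ 2

variable {M c κ x : ℝ} {w G G₁ G₂ : ℝ → ℝ}

lemma hasDerivAt_riccatiExponent (hw : ContinuousOn w (Ioo 0 M)) (hG : ContinuousOn G (Ioo 0 M))
    (hG₀ : ∀ x ∈ Ioo 0 M, 0 < G x) (hx : x ∈ Ioo 0 M) :
    HasDerivAt (riccatiExponent M w G) (w x / G x) x := by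
  have hcont : ContinuousOn (fun t => w t / G t) (Ioo 0 M) := hw.div hG fun t ht => (hG₀ t ht).ne'
  have hmid : M / 2 ∈ Ioo 0 M := by
    have := hx.1.trans hx.2
    constructor <;> linarith
  exact intervalIntegral.integral_hasDerivAt_right
    (hcont.mono (ordConnected_Ioo.uIcc_subset hmid hx)).intervalIntegrable
    (hcont.stronglyMeasurableAtFilter isOpen_Ioo x hx) (hcont.continuousAt (isOpen_Ioo.mem_nhds hx))

lemma continuousOn_riccatiExponent (hw : ContinuousOn w (Ioo 0 M))
    (hG : ContinuousOn G (Ioo 0 M)) (hG₀ : ∀ x ∈ Ioo 0 M, 0 < G x) :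
    ContinuousOn (riccatiExponent M w G) (Ioo 0 M) :=
  HasDerivAt.continuousOn fun _ hx => hasDerivAt_riccatiExponent hw hG hG₀ hx

lemma riccatiTest_of_mem (w G : ℝ → ℝ) (hx : x ∈ Ioo 0 M) :
    riccatiTest M w G x = exp (riccatiExponent M w G x) :=
  indicator_of_mem hx _

lemma riccatiTest_pos (w G : ℝ → ℝ) (hx : x ∈ Ioo 0 M) : 0 < riccatiTest M w G x := by
  rw [riccatiTest_of_mem w G hx]
  exact exp_pos _

lemma hasDerivAt_riccatiTest (hw : ContinuousOn w (Ioo 0 M)) (hG : ContinuousOn G (Ioo 0 M))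
    (hG₀ : ∀ x ∈ Ioo 0 M, 0 < G x) (hx : x ∈ Ioo 0 M) :
    HasDerivAt (riccatiTest M w G) (w x / G x * riccatiTest M w G x) x := by
  have hexp := (hasDerivAt_riccatiExponent hw hG hG₀ hx).exp
  rw [mul_comm, riccatiTest_of_mem w G hx]
  exact hexp.congr_of_eventuallyEq
    (eventually_of_mem (isOpen_Ioo.mem_nhds hx) fun y hy => riccatiTest_of_mem w G hy)

lemma measurable_riccatiTest (hw : ContinuousOn w (Ioo 0 M)) (hG : ContinuousOn G (Ioo 0 M))
    (hG₀ : ∀ x ∈ Ioo 0 M, 0 < G x) : Measurable (riccatiTest M w G) := by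
  rw [riccatiTest, ← piecewise_eq_indicator]
  exact (continuousOn_riccatiExponent hw hG hG₀).rexp.measurable_piecewise continuousOn_const
    measurableSet_Ioo

lemma div_le_mul_sqGap_div {g₁ g₂ y : ℝ} (hc : 0 < c) (hg₁ : 0 < g₁) (hg : g₁ ≤ g₂)
    (hy : y ≤ c / 2) : y / g₂ ≤ 2 / (3 * c) * (sqGap c y / g₁) := by
  have hg₂ : 0 < g₂ := hg₁.trans_le hg
  rcases le_total y 0 with hy₀ | hy₀
  · have := sqGap_nonneg c y
    exact (div_nonpos_of_nonpos_of_nonneg hy₀ hg₂.le).trans (by positivity)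
  · have le_sqGap : 3 / 4 * c ^ 2 ≤ sqGap c y := by
      nlinarith [sub_sq_le_sqGap c y, mul_le_mul hy hy hy₀ (by positivity : 0 ≤ c / 2)]
    calc y / g₂ ≤ c / 2 / g₁ := by gcongr
      _ = 2 / (3 * c) * (3 / 4 * c ^ 2 / g₁) := by field_simp; norm_num
      _ ≤ 2 / (3 * c) * (sqGap c y / g₁) := by gcongr

lemma hasDerivAt_riccatiExponent_add_mul (hw : IsRiccatiSol c κ G₁⁻¹ w (Ioo 0 M))
    (hG₂ : ContinuousOn G₂ (Ioo 0 M)) (hG₂₀ : ∀ x ∈ Ioo 0 M, 0 < G₂ x) (k : ℝ)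
    (hx : x ∈ Ioo 0 M) :
    HasDerivAt (fun x => riccatiExponent M w G₂ x + k * (w x + κ * x))
      (w x / G₂ x + k * (sqGap c (w x) / G₁ x)) x := by
  refine ((hasDerivAt_riccatiExponent hw.continuousOn hG₂ hG₂₀ hx).add
    (((hw x hx).add ((hasDerivAt_id' x).const_mul κ)).const_mul k)).congr_deriv ?_
  simp [riccatiField, div_eq_mul_inv]

lemma antitoneOn_riccatiExponent_sub {s : Set ℝ} (hs : Convex ℝ s) (hsM : s ⊆ Ioo 0 M)
    (hc : 0 < c) (hG₂ : ContinuousOn G₂ (Ioo 0 M)) (hG₁₀ : ∀ x ∈ Ioo 0 M, 0 < G₁ x)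
    (hle : ∀ x ∈ Ioo 0 M, G₁ x ≤ G₂ x) (hw : IsRiccatiSol c κ G₁⁻¹ w (Ioo 0 M))
    (hws : ∀ x ∈ s, w x ≤ c / 2) :
    AntitoneOn (fun x => riccatiExponent M w G₂ x + -(2 / (3 * c)) * (w x + κ * x)) s := by
  have hderiv := fun x hx => hasDerivAt_riccatiExponent_add_mul (x := x) hw hG₂
    (fun x hx => (hG₁₀ x hx).trans_le (hle x hx)) (-(2 / (3 * c))) (hsM hx)
  refine antitoneOn_of_hasDerivWithinAt_nonpos hs (HasDerivAt.continuousOn hderiv)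
    (fun x hx => (hderiv x (interior_subset hx)).hasDerivWithinAt) fun x hx => ?_
  have hxM := hsM (interior_subset hx)
  linarith [div_le_mul_sqGap_div hc (hG₁₀ x hxM) (hle x hxM) (hws x (interior_subset hx))]

lemma monotoneOn_riccatiExponent_add {s : Set ℝ} (hs : Convex ℝ s) (hsM : s ⊆ Ioo 0 M)
    (hc : 0 < c) (hG₂ : ContinuousOn G₂ (Ioo 0 M)) (hG₁₀ : ∀ x ∈ Ioo 0 M, 0 < G₁ x)
    (hle : ∀ x ∈ Ioo 0 M, G₁ x ≤ G₂ x) (hw : IsRiccatiSol c κ G₁⁻¹ w (Ioo 0 M))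
    (hws : ∀ x ∈ s, -w x ≤ c / 2) :
    MonotoneOn (fun x => riccatiExponent M w G₂ x + 2 / (3 * c) * (w x + κ * x)) s := by
  have hderiv := fun x hx => hasDerivAt_riccatiExponent_add_mul (x := x) hw hG₂
    (fun x hx => (hG₁₀ x hx).trans_le (hle x hx)) (2 / (3 * c)) (hsM hx)
  refine monotoneOn_of_hasDerivWithinAt_nonneg hs (HasDerivAt.continuousOn hderiv)
    (fun x hx => (hderiv x (interior_subset hx)).hasDerivWithinAt) fun x hx => ?_
  have hxM := hsM (interior_subset hx)
  have := div_le_mul_sqGap_div hc (hG₁₀ x hxM) (hle x hxM) (hws x (interior_subset hx))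
  rw [sqGap_neg, neg_div] at this
  linarith

-- Within `c / (2 κ)` of an end point the bounds on `w` force `w ≤ c / 2` resp. `-w ≤ c / 2`, and
-- there `w / G₂` is controlled by a multiple of `w' + κ`, whose primitive `w + κ x` is bounded.
lemma exists_riccatiExponent_le (hM : 0 < M) (hc : 0 < c) (hκ : 0 < κ)
    (hG₂ : ContinuousOn G₂ (Ioo 0 M)) (hG₁₀ : ∀ x ∈ Ioo 0 M, 0 < G₁ x)
    (hle : ∀ x ∈ Ioo 0 M, G₁ x ≤ G₂ x) (hw : IsRiccatiSol c κ G₁⁻¹ w (Ioo 0 M))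
    (hwκ : ∀ x ∈ Ioo 0 M, -(κ * x) ≤ w x ∧ w x ≤ κ * (M - x)) :
    ∃ B, ∀ x ∈ Ioo 0 M, riccatiExponent M w G₂ x ≤ B := by
  have hG₂₀ : ∀ x ∈ Ioo 0 M, 0 < G₂ x := fun x hx => (hG₁₀ x hx).trans_le (hle x hx)
  obtain ⟨δ, hδ, hδc, hδM⟩ : ∃ δ > 0, κ * δ ≤ c / 2 ∧ δ ≤ M / 2 := by
    refine ⟨min (c / 2 / κ) (M / 2), by positivity, ?_, min_le_right _ _⟩
    rw [mul_comm, ← le_div_iff₀ hκ]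
    exact min_le_left _ _
  have left_sub : Ioc 0 δ ⊆ Ioo 0 M := fun x hx => ⟨hx.1, by linarith [hx.2]⟩
  have right_sub : Ico (M - δ) M ⊆ Ioo 0 M := fun x hx => ⟨by linarith [hx.1], hx.2⟩
  have mid_sub : Icc δ (M - δ) ⊆ Ioo 0 M := Icc_subset_Ioo hδ (by linarith)
  have left_mono := monotoneOn_riccatiExponent_add (convex_Ioc 0 δ) left_sub hc hG₂ hG₁₀ hle hw
    fun x hx => by linarith [(hwκ x (left_sub hx)).1, mul_le_mul_of_nonneg_left hx.2 hκ.le]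
  have right_anti := antitoneOn_riccatiExponent_sub (convex_Ico (M - δ) M) right_sub hc hG₂ hG₁₀
    hle hw fun x hx => by
      linarith [(hwκ x (right_sub hx)).2, mul_le_mul_of_nonneg_left hx.1 hκ.le]
  obtain ⟨B, hB⟩ := (isCompact_Icc.image_of_continuousOn
    ((continuousOn_riccatiExponent hw.continuousOn hG₂ hG₂₀).mono mid_sub)).bddAbove
  have le_B : ∀ x ∈ Icc δ (M - δ), riccatiExponent M w G₂ x ≤ B := fun x hx =>
    hB (mem_image_of_mem _ hx)
  have bound_mul : ∀ x ∈ Ioo 0 M, 2 / (3 * c) * (w x + κ * x) ∈ Icc 0 (2 / (3 * c) * (κ * M)) :=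
    fun x hx => ⟨mul_nonneg (by positivity) (by linarith [(hwκ x hx).1]),
      mul_le_mul_of_nonneg_left (by linarith [(hwκ x hx).2]) (by positivity)⟩
  refine ⟨B + 2 / (3 * c) * (κ * M), fun x hx => ?_⟩
  rcases le_total x δ with hxδ | hδx
  · have := left_mono ⟨hx.1, hxδ⟩ (right_mem_Ioc.2 hδ) hxδ
    have hδ' : δ ∈ Icc δ (M - δ) := left_mem_Icc.2 (by linarith)
    linarith [le_B δ hδ', (bound_mul x hx).1, (bound_mul δ (mid_sub hδ')).2]
  rcases le_total x (M - δ) with hxM | hMx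
  · linarith [le_B x ⟨hδx, hxM⟩, (bound_mul x hx).1, (bound_mul x hx).2]
  · have := right_anti (left_mem_Ico.2 (by linarith)) ⟨hMx, hx.2⟩ hMx
    have hδ' : M - δ ∈ Icc δ (M - δ) := right_mem_Icc.2 (by linarith)
    linarith [le_B (M - δ) hδ', (bound_mul x hx).2, (bound_mul (M - δ) (mid_sub hδ')).1]

lemma exists_riccatiTest_sq_le (hM : 0 < M) (hc : 0 < c) (hκ : 0 < κ)
    (hG₂ : ContinuousOn G₂ (Ioo 0 M)) (hG₁₀ : ∀ x ∈ Ioo 0 M, 0 < G₁ x)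
    (hle : ∀ x ∈ Ioo 0 M, G₁ x ≤ G₂ x) (hw : IsRiccatiSol c κ G₁⁻¹ w (Ioo 0 M))
    (hwκ : ∀ x ∈ Ioo 0 M, -(κ * x) ≤ w x ∧ w x ≤ κ * (M - x)) :
    ∃ B, ∀ x ∈ Ioo 0 M, riccatiTest M w G₂ x ^ 2 ≤ B := by
  obtain ⟨B, hB⟩ := exists_riccatiExponent_le hM hc hκ hG₂ hG₁₀ hle hw hwκ
  refine ⟨exp B ^ 2, fun x hx => ?_⟩
  rw [riccatiTest_of_mem w G₂ hx]
  gcongr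
  exact hB x hx

lemma integrableOn_riccatiTest_sq {B : ℝ} (hw : ContinuousOn w (Ioo 0 M))
    (hG : ContinuousOn G (Ioo 0 M)) (hG₀ : ∀ x ∈ Ioo 0 M, 0 < G x)
    (hB : ∀ x ∈ Ioo 0 M, riccatiTest M w G x ^ 2 ≤ B) :
    IntegrableOn (fun x => riccatiTest M w G x ^ 2) (Ioo 0 M) :=
  .of_bound measure_Ioo_lt_top
    ((measurable_riccatiTest hw hG hG₀).pow_const 2).aestronglyMeasurable B
    (ae_restrict_of_forall_mem measurableSet_Ioo fun x hx =>
      (norm_of_nonneg (sq_nonneg _)).trans_le (hB x hx))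

lemma riccatiEnergy_nonneg (hG₁₀ : ∀ x ∈ Ioo 0 M, 0 < G₁ x) (hG₂₀ : ∀ x ∈ Ioo 0 M, 0 < G₂ x)
    (hx : x ∈ Ioo 0 M) : 0 ≤ riccatiEnergy M c w G₁ G₂ x := by
  have := sqGap_nonneg c (w x)
  have := hG₁₀ x hx
  have := hG₂₀ x hx
  unfold riccatiEnergy
  positivity

lemma hasDerivAt_mul_riccatiTest_sq (hG₂ : ContinuousOn G₂ (Ioo 0 M))
    (hG₂₀ : ∀ x ∈ Ioo 0 M, 0 < G₂ x) (hw : IsRiccatiSol c κ G₁⁻¹ w (Ioo 0 M))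
    (hx : x ∈ Ioo 0 M) :
    HasDerivAt (fun x => w x * riccatiTest M w G₂ x ^ 2)
      (riccatiEnergy M c w G₁ G₂ x - κ * riccatiTest M w G₂ x ^ 2) x := by
  refine ((hw x hx).fun_mul
    ((hasDerivAt_riccatiTest hw.continuousOn hG₂ hG₂₀ hx).fun_pow 2)).congr_deriv ?_
  simp only [riccatiField, riccatiEnergy, Pi.inv_apply]
  ring

lemma mul_riccatiTest_sq_mem_Icc {B : ℝ} (hκ : 0 ≤ κ) (hwκ : -(κ * x) ≤ w x ∧ w x ≤ κ * (M - x))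
    (hB : riccatiTest M w G x ^ 2 ≤ B) (hx : x ∈ Ioo 0 M) :
    w x * riccatiTest M w G x ^ 2 ∈ Icc (-(κ * B * x)) (κ * B * (M - x)) := by
  constructor
  · nlinarith [mul_le_mul_of_nonneg_right hwκ.1 (sq_nonneg (riccatiTest M w G x)),
      mul_le_mul_of_nonneg_left hB (mul_nonneg hκ hx.1.le)]
  · nlinarith [mul_le_mul_of_nonneg_right hwκ.2 (sq_nonneg (riccatiTest M w G x)),
      mul_le_mul_of_nonneg_left hB (mul_nonneg hκ (sub_nonneg.2 hx.2.le))]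

lemma integrableOn_riccatiEnergy {B : ℝ} (hκ : 0 ≤ κ) (hG₂ : ContinuousOn G₂ (Ioo 0 M))
    (hG₁₀ : ∀ x ∈ Ioo 0 M, 0 < G₁ x) (hG₂₀ : ∀ x ∈ Ioo 0 M, 0 < G₂ x)
    (hw : IsRiccatiSol c κ G₁⁻¹ w (Ioo 0 M))
    (hwκ : ∀ x ∈ Ioo 0 M, -(κ * x) ≤ w x ∧ w x ≤ κ * (M - x))
    (hB : ∀ x ∈ Ioo 0 M, riccatiTest M w G₂ x ^ 2 ≤ B) :
    IntegrableOn (riccatiEnergy M c w G₁ G₂) (Ioo 0 M) := by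
  set f := riccatiTest M w G₂ with hf
  have hderiv : ∀ x ∈ Ioo 0 M, HasDerivAt (fun x => w x * f x ^ 2 + κ * B * x)
      (riccatiEnergy M c w G₁ G₂ x + κ * (B - f x ^ 2)) x := fun x hx =>
    ((hasDerivAt_mul_riccatiTest_sq hG₂ hG₂₀ hw hx).fun_add
      ((hasDerivAt_id' x).const_mul (κ * B))).congr_deriv (by ring)
  have bound : ∀ x ∈ Ioo 0 M, w x * f x ^ 2 + κ * B * x ∈ Icc 0 (κ * B * M) := by
    intro x hx
    have := mul_riccatiTest_sq_mem_Icc hκ (hwκ x hx) (hB x hx) hx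
    constructor <;> linarith [this.1, this.2]
  have integrable_add := integrableOn_Ioo_of_hasDerivAt_nonneg hderiv
    (fun x hx => add_nonneg (riccatiEnergy_nonneg hG₁₀ hG₂₀ hx)
      (mul_nonneg hκ (sub_nonneg.2 (hB x hx))))
    ⟨0, forall_mem_image.2 fun x hx => (bound x hx).1⟩
    ⟨κ * B * M, forall_mem_image.2 fun x hx => (bound x hx).2⟩
  have integrable_sq := integrableOn_riccatiTest_sq hw.continuousOn hG₂ hG₂₀ hB
  have integrable_const : IntegrableOn (fun _ => B) (Ioo 0 M) := integrableOn_const (by simp)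
  simpa [Pi.sub_def, ← hf] using
    integrable_add.sub ((integrable_const.sub integrable_sq).const_mul κ)

lemma integral_riccatiEnergy_le {B : ℝ} (hM : 0 < M) (hκ : 0 ≤ κ)
    (hG₂ : ContinuousOn G₂ (Ioo 0 M)) (hG₁₀ : ∀ x ∈ Ioo 0 M, 0 < G₁ x)
    (hG₂₀ : ∀ x ∈ Ioo 0 M, 0 < G₂ x) (hw : IsRiccatiSol c κ G₁⁻¹ w (Ioo 0 M))
    (hwκ : ∀ x ∈ Ioo 0 M, -(κ * x) ≤ w x ∧ w x ≤ κ * (M - x))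
    (hB : ∀ x ∈ Ioo 0 M, riccatiTest M w G₂ x ^ 2 ≤ B) :
    ∫ x in Ioo 0 M, riccatiEnergy M c w G₁ G₂ x ≤
      κ * ∫ x in Ioo 0 M, riccatiTest M w G₂ x ^ 2 := by
  set f := riccatiTest M w G₂
  have hf_sq := (integrableOn_riccatiTest_sq hw.continuousOn hG₂ hG₂₀ hB).const_mul κ
  have hN := integrableOn_riccatiEnergy hκ hG₂ hG₁₀ hG₂₀ hw hwκ hB
  rw [← integral_const_mul, ← sub_nonneg, ← integral_sub hf_sq hN]
  have hderiv := fun x hx => (hasDerivAt_mul_riccatiTest_sq (x := x) hG₂ hG₂₀ hw hx).fun_neg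
  have bound : ∀ x ∈ Ioo 0 M, w x * f x ^ 2 ∈ Icc (-(κ * B * x)) (κ * B * (M - x)) := fun x hx =>
    mul_riccatiTest_sq_mem_Icc hκ (hwκ x hx) (hB x hx) hx
  refine integral_nonneg_of_deriv_le hM (fun x hx => (hderiv x hx).differentiableAt)
    (hf_sq.sub hN) (fun x hx => by simp [(hderiv x hx).deriv]) (fun ε hε => ?_) fun ε hε => ?_
  · have small : ∀ᶠ x in 𝓝[>] (0 : ℝ), κ * B * x < ε :=
      (((continuous_const_mul (κ * B)).tendsto' 0 0 (mul_zero _)).eventually_lt_const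
        hε).filter_mono nhdsWithin_le_nhds
    exact ((small.and (Ioo_mem_nhdsGT hM)).mono fun x hx =>
      (neg_le.1 (bound x hx.2).1).trans_lt hx.1).frequently
  · have small : ∀ᶠ x in 𝓝[<] M, κ * B * (M - x) < ε :=
      (((continuous_const.mul (continuous_const.sub continuous_id)).tendsto' M 0
        (by simp)).eventually_lt_const hε).filter_mono nhdsWithin_le_nhds
    exact ((small.and (Ioo_mem_nhdsLT hM)).mono fun x hx =>
      (neg_lt_neg hx.1).trans_le (neg_le_neg (bound x hx.2).2)).frequently

lemma sq_add_sq_div_le {g₁ g₂ y : ℝ} (hg₁ : 0 < g₁) (hg : g₁ ≤ g₂) :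
    (c ^ 2 + y ^ 2) / g₂ ≤ sqGap c y / g₁ + 2 * y ^ 2 / g₂ := by
  have hg₂ := hg₁.trans_le hg
  calc (c ^ 2 + y ^ 2) / g₂ = (c ^ 2 - y ^ 2) / g₂ + 2 * y ^ 2 / g₂ := by ring
    _ ≤ sqGap c y / g₂ + 2 * y ^ 2 / g₂ := by gcongr; exact sub_sq_le_sqGap c y
    _ ≤ sqGap c y / g₁ + 2 * y ^ 2 / g₂ := by gcongr; exact sqGap_nonneg c y

lemma sq_add_sq_div_lt {g₁ g₂ y : ℝ} (hg₁ : 0 < g₁) (hg : g₁ < g₂) (hy : y ^ 2 ≠ c ^ 2) :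
    (c ^ 2 + y ^ 2) / g₂ < sqGap c y / g₁ + 2 * y ^ 2 / g₂ := by
  have hg₂ := hg₁.trans hg
  have hsplit : (c ^ 2 + y ^ 2) / g₂ = (c ^ 2 - y ^ 2) / g₂ + 2 * y ^ 2 / g₂ := by ring
  rw [hsplit]
  refine add_lt_add_left ?_ _
  rcases hy.lt_or_gt with hlt | hgt
  · calc (c ^ 2 - y ^ 2) / g₂ < (c ^ 2 - y ^ 2) / g₁ :=
          div_lt_div_of_pos_left (sub_pos.2 hlt) hg₁ hg
      _ ≤ sqGap c y / g₁ := by gcongr; exact sub_sq_le_sqGap c y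
  · exact (div_neg_of_neg_of_pos (sub_neg.2 hgt) hg₂).trans_le
      (div_nonneg (sqGap_nonneg c y) hg₁.le)

lemma IsRiccatiSol.countable_sq_eq {H : ℝ → ℝ} {s : Set ℝ} (hw : IsRiccatiSol c κ H w s)
    (hc : c ≠ 0) (hκ : κ ≠ 0) : {x ∈ s | w x ^ 2 = c ^ 2}.Countable := by
  refine countable_preimage_singleton_of_deriv_ne_zero fun x hx hwx => ?_
  have hw₀ : w x ≠ 0 := fun h => hc (by simpa [h] using hwx.symm)
  rw [((hw x hx).fun_pow 2).deriv, riccatiField, sqGap_of_le_abs (sq_le_sq.1 hwx.ge)]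
  simp [hw₀, hκ]

lemma energy_riccatiTest_eq (hG : ContinuousOn G (Ioo 0 M)) (hG₀ : ∀ x ∈ Ioo 0 M, 0 < G x)
    (hw : ContinuousOn w (Ioo 0 M)) (hx : x ∈ Ioo 0 M) :
    G x * deriv (riccatiTest M w G) x ^ 2 + c ^ 2 * riccatiTest M w G x ^ 2 / G x =
      (c ^ 2 + w x ^ 2) / G x * riccatiTest M w G x ^ 2 := by
  have := (hG₀ x hx).ne'
  rw [(hasDerivAt_riccatiTest hw hG hG₀ hx).deriv]
  field_simp
  ring

lemma energy_riccatiTest_le (hG₂ : ContinuousOn G₂ (Ioo 0 M)) (hG₁₀ : ∀ x ∈ Ioo 0 M, 0 < G₁ x)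
    (hle : ∀ x ∈ Ioo 0 M, G₁ x ≤ G₂ x) (hw : ContinuousOn w (Ioo 0 M)) (hx : x ∈ Ioo 0 M) :
    G₂ x * deriv (riccatiTest M w G₂) x ^ 2 + c ^ 2 * riccatiTest M w G₂ x ^ 2 / G₂ x ≤
      riccatiEnergy M c w G₁ G₂ x := by
  rw [energy_riccatiTest_eq hG₂ (fun x hx => (hG₁₀ x hx).trans_le (hle x hx)) hw hx]
  exact mul_le_mul_of_nonneg_right (sq_add_sq_div_le (hG₁₀ x hx) (hle x hx)) (sq_nonneg _)

lemma energy_riccatiTest_lt (hG₂ : ContinuousOn G₂ (Ioo 0 M)) (hG₁₀ : ∀ x ∈ Ioo 0 M, 0 < G₁ x)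
    (hle : ∀ x ∈ Ioo 0 M, G₁ x ≤ G₂ x) (hw : ContinuousOn w (Ioo 0 M)) (hx : x ∈ Ioo 0 M)
    (hlt : G₁ x < G₂ x) (hwx : w x ^ 2 ≠ c ^ 2) :
    G₂ x * deriv (riccatiTest M w G₂) x ^ 2 + c ^ 2 * riccatiTest M w G₂ x ^ 2 / G₂ x <
      riccatiEnergy M c w G₁ G₂ x := by
  rw [energy_riccatiTest_eq hG₂ (fun x hx => (hG₁₀ x hx).trans_le (hle x hx)) hw hx]
  exact mul_lt_mul_of_pos_right (sq_add_sq_div_lt (hG₁₀ x hx) hlt hwx)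
    (pow_pos (riccatiTest_pos w G₂ hx) 2)

lemma admissible_riccatiTest {B : ℝ} (hM : 0 < M) (hc : c ≠ 0) (hG₂ : ContinuousOn G₂ (Ioo 0 M))
    (hG₁₀ : ∀ x ∈ Ioo 0 M, 0 < G₁ x) (hle : ∀ x ∈ Ioo 0 M, G₁ x ≤ G₂ x)
    (hw : ContinuousOn w (Ioo 0 M)) (hB : ∀ x ∈ Ioo 0 M, riccatiTest M w G₂ x ^ 2 ≤ B)
    (hN : IntegrableOn (riccatiEnergy M c w G₁ G₂) (Ioo 0 M)) :
    Admissible M G₂ (riccatiTest M w G₂) := by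
  have hG₂₀ : ∀ x ∈ Ioo 0 M, 0 < G₂ x := fun x hx => (hG₁₀ x hx).trans_le (hle x hx)
  have hmeas := measurable_riccatiTest hw hG₂ hG₂₀
  have energy_le := fun x hx => energy_riccatiTest_le (c := c) (x := x) hG₂ hG₁₀ hle hw hx
  have hG₂_meas := hG₂.aestronglyMeasurable (μ := volume) measurableSet_Ioo
  refine ⟨hmeas, fun hzero => ?_,
    fun x hx => (hasDerivAt_riccatiTest hw hG₂ hG₂₀ hx).differentiableAt,
    integrableOn_riccatiTest_sq hw hG₂ hG₂₀ hB, ?_, ?_⟩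
  · have hfalse : ∀ᵐ _ ∂volume.restrict (Ioo 0 M), False := by
      filter_upwards [hzero, ae_restrict_mem measurableSet_Ioo] with x hx hxM
      exact (riccatiTest_pos w G₂ hxM).ne' hx
    rw [eventually_false_iff_eq_bot, ae_eq_bot, Measure.restrict_eq_zero] at hfalse
    simp [hM.not_ge] at hfalse
  · refine hN.mono' (hG₂_meas.mul ((measurable_deriv _).pow_const 2).aestronglyMeasurable)
      (ae_restrict_of_forall_mem measurableSet_Ioo fun x hx => ?_)
    have := hG₂₀ x hx
    rw [norm_of_nonneg (by positivity)]
    exact (le_add_of_nonneg_right (by positivity)).trans (energy_le x hx)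
  · refine (hN.div_const (c ^ 2)).mono'
      ((hmeas.pow_const 2).aestronglyMeasurable.div₀ hG₂_meas)
      (ae_restrict_of_forall_mem measurableSet_Ioo fun x hx => ?_)
    have := hG₂₀ x hx
    rw [norm_of_nonneg (by positivity), le_div_iff₀' (by positivity), ← mul_div_assoc]
    exact (le_add_of_nonneg_left (by positivity)).trans (energy_le x hx)

lemma integral_energy_riccatiTest_lt (hc : c ≠ 0) (hκ : κ ≠ 0) (hG₂ : ContinuousOn G₂ (Ioo 0 M))
    (hG₁₀ : ∀ x ∈ Ioo 0 M, 0 < G₁ x) (hle : ∀ x ∈ Ioo 0 M, G₁ x ≤ G₂ x)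
    (hw : IsRiccatiSol c κ G₁⁻¹ w (Ioo 0 M)) (hf : Admissible M G₂ (riccatiTest M w G₂))
    (hN : IntegrableOn (riccatiEnergy M c w G₁ G₂) (Ioo 0 M))
    (hlt : 0 < volume {x ∈ Ioo 0 M | G₁ x < G₂ x}) :
    ∫ x in Ioo 0 M, (G₂ x * deriv (riccatiTest M w G₂) x ^ 2 +
        c ^ 2 * riccatiTest M w G₂ x ^ 2 / G₂ x) <
      ∫ x in Ioo 0 M, riccatiEnergy M c w G₁ G₂ x := by
  have hf_energy := hf.integrableOn_energy c
  rw [← sub_pos, ← integral_sub hN hf_energy, setIntegral_pos_iff_support_of_nonneg_ae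
    (ae_restrict_of_forall_mem measurableSet_Ioo fun x hx =>
      sub_nonneg.2 (energy_riccatiTest_le hG₂ hG₁₀ hle hw.continuousOn hx)) (hN.sub hf_energy)]
  rw [← measure_sdiff_null ((hw.countable_sq_eq hc hκ).measure_zero volume)] at hlt
  refine hlt.trans_le (measure_mono fun x hx => ?_)
  obtain ⟨⟨hxM, hxlt⟩, hwx⟩ := hx
  exact ⟨(sub_pos.2 (energy_riccatiTest_lt hG₂ hG₁₀ hle hw.continuousOn hxM hxlt
    fun h => hwx ⟨hxM, h⟩)).ne', hxM⟩

end TestFunction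

theorem kappa1_antitone_in_weight_general (M ν : ℝ) (hM : 0 < M) (hν : 0 < ν) (G₁ G₂ : ℝ → ℝ)
    (hG₁ : ContinuousOn G₁ (Ioo 0 M)) (hG₂ : ContinuousOn G₂ (Ioo 0 M))
    (hp₁ : ∀ a ∈ Ioo 0 M, 0 < G₁ a) (hle : ∀ a ∈ Ioo 0 M, G₁ a ≤ G₂ a) :
    kappa1 M ν G₂ ≤ kappa1 M ν G₁ ∧
      (0 < volume {a ∈ Ioo 0 M | G₁ a < G₂ a} → kappa1 M ν G₂ < kappa1 M ν G₁) := by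
  have hp₂ : ∀ a ∈ Ioo 0 M, 0 < G₂ a := fun a ha => (hp₁ a ha).trans_le (hle a ha)
  have hc : 0 < 2 * π * ν := by positivity
  have hκ := kappa1_pos hM hν hG₁ hp₁
  obtain ⟨w, hw, hwκ⟩ := exists_isRiccatiSol_kappa1 hM hν hG₁ hp₁
  obtain ⟨B, hB⟩ := exists_riccatiTest_sq_le hM hc hκ hG₂ hp₁ hle hw hwκ
  have hN := integrableOn_riccatiEnergy hκ.le hG₂ hp₁ hp₂ hw hwκ hB
  have hf := admissible_riccatiTest hM hc.ne' hG₂ hp₁ hle hw.continuousOn hB hN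
  have hN_le := integral_riccatiEnergy_le hM hκ.le hG₂ hp₁ hp₂ hw hwκ hB
  have hκ_le := kappa1_le_rayleigh (ν := ν) hp₂ hf
  rw [rayleigh_eq] at hκ_le
  refine ⟨hκ_le.trans ?_, fun hlt => hκ_le.trans_lt ?_⟩
  · rw [div_le_iff₀ hf.integral_sq_pos]
    exact (setIntegral_mono_on (hf.integrableOn_energy _) hN measurableSet_Ioo fun a ha =>
      energy_riccatiTest_le hG₂ hp₁ hle hw.continuousOn ha).trans hN_le
  · rw [div_lt_iff₀ hf.integral_sq_pos]
    exact (integral_energy_riccatiTest_lt hc.ne' hκ.ne' hG₂ hp₁ hle hw hf hN hlt).trans_le hN_le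

/-- Monotonicity of the first eigenvalue `κ₁` of the one-dimensional reduced problem
with respect to the weight function `G` (case of a surface with boundary: singular
behavior `G(a) ~ 4πa` only at `a = 0`). -/
theorem kappa1_antitone_in_weight (M ν : ℝ) (hM : 0 < M) (hν : ν ∈ Ioc (0:ℝ) (1/2))
    (G₁ G₂ : ℝ → ℝ)
    (hs₁ : ContDiffOn ℝ (⊤ : ℕ∞) G₁ (Ioo 0 M)) (hs₂ : ContDiffOn ℝ (⊤ : ℕ∞) G₂ (Ioo 0 M))
    (hp₁ : ∀ a ∈ Ioo (0:ℝ) M, 0 < G₁ a) (hp₂ : ∀ a ∈ Ioo (0:ℝ) M, 0 < G₂ a)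
    (hle : ∀ a ∈ Ioo (0:ℝ) M, G₁ a ≤ G₂ a)
    (h₁ : Tendsto (fun a => G₁ a / (4 * π * a)) (nhdsWithin 0 (Ioo 0 M)) (nhds 1))
    (h₂ : Tendsto (fun a => G₂ a / (4 * π * a)) (nhdsWithin 0 (Ioo 0 M)) (nhds 1)) :
    kappa1 M ν G₂ ≤ kappa1 M ν G₁ ∧
      (0 < volume {a ∈ Ioo (0:ℝ) M | G₁ a < G₂ a} →
        kappa1 M ν G₂ < kappa1 M ν G₁) :=
  kappa1_antitone_in_weight_general M ν hM hν.1 G₁ G₂ hs₁.continuousOn hs₂.continuousOn hp₁ hle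
end

section
/- Let α > 0. For every smooth function f : (0,π) → ℝ with compact support in (0,π), one has ∫₀^π (f'(r)² + α² f(r)²/sin²(r)) sin(r) dr ≥ α(α+1) ∫₀^π f(r)² sin(r) dr. -/
open MeasureTheory Real Set Filter intervalIntegral

/-!
If `φ` satisfies the Riccati inequality `φ' + φ² / p ≤ q`, then completing the square gives
`p f'² + q f² ≥ p (f' - (φ / p) f)² + (φ f²)' ≥ (φ f²)'`, and the last term integrates to zero when
`f` vanishes at both endpoints. A positive eigenfunction `u` of `-(p u')' + q u = μ w u` yields the
solution `φ = p u' / u` of the Riccati equation with `q - μ w` in place of `q`. Here `p = w = sin`,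
`q = α² / sin` and `u = sin ^ α`, so that `φ = α cos` and `μ = α (α + 1)`.
-/

theorem deriv_mul_sq_le_energy_of_riccati {p q φ φ' : ℝ} (hp : 0 < p) (hq : φ' + φ ^ 2 / p ≤ q)
    (y y' : ℝ) :
    φ' * y ^ 2 + φ * (2 * y * y') ≤ p * y' ^ 2 + q * y ^ 2 := by
  have completed_square :
      p * (y' - φ / p * y) ^ 2 = p * y' ^ 2 - φ * (2 * y * y') + φ ^ 2 / p * y ^ 2 := by
    field_simp
    ring
  have square_nonneg : 0 ≤ p * (y' - φ / p * y) ^ 2 := by positivity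
  have potential_le : (φ' + φ ^ 2 / p) * y ^ 2 ≤ q * y ^ 2 := by gcongr
  linarith

section SturmLiouville

variable {a b : ℝ} {p q w φ φ' f f' : ℝ → ℝ}

theorem sub_le_integral_energy_of_riccati (hab : a ≤ b)
    (hφc : ContinuousOn φ (Icc a b)) (hφ : ∀ x ∈ Ioo a b, HasDerivAt φ (φ' x) x)
    (hfc : ContinuousOn f (Icc a b)) (hf : ∀ x ∈ Ioo a b, HasDerivAt f (f' x) x)
    (hp : ∀ x ∈ Ioo a b, 0 < p x) (hq : ∀ x ∈ Ioo a b, φ' x + φ x ^ 2 / p x ≤ q x)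
    (hint : IntervalIntegrable (fun x ↦ p x * f' x ^ 2 + q x * f x ^ 2) volume a b) :
    φ b * f b ^ 2 - φ a * f a ^ 2 ≤ ∫ x in a..b, (p x * f' x ^ 2 + q x * f x ^ 2) := by
  refine sub_le_integral_of_hasDeriv_right_of_le hab (hφc.mul (hfc.pow 2))
    (fun x hx ↦ ((hφ x hx).mul ((hf x hx).pow 2)).hasDerivWithinAt)
    ((intervalIntegrable_iff_integrableOn_Icc_of_le hab).mp hint) fun x hx ↦ ?_
  simpa using deriv_mul_sq_le_energy_of_riccati (hp x hx) (hq x hx) (f x) (f' x)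

theorem mul_integral_le_integral_energy_of_riccati {μ : ℝ} (hab : a ≤ b)
    (hφc : ContinuousOn φ (Icc a b)) (hφ : ∀ x ∈ Ioo a b, HasDerivAt φ (φ' x) x)
    (hfc : ContinuousOn f (Icc a b)) (hf : ∀ x ∈ Ioo a b, HasDerivAt f (f' x) x)
    (hfa : f a = 0) (hfb : f b = 0) (hp : ∀ x ∈ Ioo a b, 0 < p x)
    (hq : ∀ x ∈ Ioo a b, φ' x + φ x ^ 2 / p x ≤ q x - μ * w x)
    (hw : IntervalIntegrable (fun x ↦ f x ^ 2 * w x) volume a b)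
    (hint : IntervalIntegrable (fun x ↦ p x * f' x ^ 2 + q x * f x ^ 2) volume a b) :
    μ * ∫ x in a..b, f x ^ 2 * w x ≤ ∫ x in a..b, (p x * f' x ^ 2 + q x * f x ^ 2) := by
  have shifted_energy : (fun x ↦ p x * f' x ^ 2 + (q x - μ * w x) * f x ^ 2) =
      fun x ↦ p x * f' x ^ 2 + q x * f x ^ 2 - μ * (f x ^ 2 * w x) := by
    ext x
    ring
  have hμw := hw.const_mul μ
  have energy_nonneg := sub_le_integral_energy_of_riccati hab hφc hφ hfc hf hp hq
    (shifted_energy ▸ hint.sub hμw)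
  rw [shifted_energy, intervalIntegral.integral_sub hint hμw, intervalIntegral.integral_const_mul,
    hfa, hfb] at energy_nonneg
  linarith

end SturmLiouville

theorem riccati_mul_cos {α r : ℝ} (hr : sin r ≠ 0) :
    α * -sin r + (α * cos r) ^ 2 / sin r = α ^ 2 / sin r - α * (α + 1) * sin r := by
  field_simp
  linear_combination α ^ 2 * sin_sq_add_cos_sq r

theorem continuous_div_of_forall_mem_tsupport_ne_zero {X G₀ : Type*} [TopologicalSpace X]
    [GroupWithZero G₀] [TopologicalSpace G₀] [ContinuousMul G₀] [ContinuousInv₀ G₀]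
    {g s : X → G₀} (hg : Continuous g) (hs : Continuous s) (h0 : ∀ x ∈ tsupport g, s x ≠ 0) :
    Continuous fun x ↦ g x / s x := by
  simp only [div_eq_mul_inv]
  exact continuous_of_tsupport fun x hx ↦
    hg.continuousAt.mul (hs.continuousAt.inv₀ (h0 x (tsupport_mul_subset_left hx)))

theorem continuous_energy_density {f s : ℝ → ℝ} (c : ℝ) (hf : ContDiff ℝ 1 f) (hs : Continuous s)
    (h0 : ∀ x ∈ tsupport f, s x ≠ 0) :
    Continuous fun x ↦ (deriv f x ^ 2 + c * f x ^ 2 / s x ^ 2) * s x := by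
  have hdiv : Continuous fun x ↦ f x / s x :=
    continuous_div_of_forall_mem_tsupport_ne_zero hf.continuous hs h0
  simp only [mul_div_assoc, ← div_pow]
  exact ((hf.continuous_deriv_one.pow 2).add (continuous_const.mul (hdiv.pow 2))).mul hs

theorem sturm_liouville_variational_bound_general (α : ℝ) {f : ℝ → ℝ}
    (hfc : ContinuousOn f (Icc 0 π)) (hf : DifferentiableOn ℝ f (Ioo 0 π))
    (hf0 : f 0 = 0) (hfπ : f π = 0)
    (hint : IntervalIntegrable
      (fun r ↦ (deriv f r ^ 2 + α ^ 2 * f r ^ 2 / sin r ^ 2) * sin r) volume 0 π) :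
    α * (α + 1) * ∫ r in (0:ℝ)..π, f r ^ 2 * sin r ≤
      ∫ r in (0:ℝ)..π, (deriv f r ^ 2 + α ^ 2 * f r ^ 2 / sin r ^ 2) * sin r := by
  have energy_eq : (fun r ↦ (deriv f r ^ 2 + α ^ 2 * f r ^ 2 / sin r ^ 2) * sin r) =
      fun r ↦ sin r * deriv f r ^ 2 + α ^ 2 / sin r * f r ^ 2 := by
    ext r
    by_cases hr : sin r = 0
    · simp [hr]
    · field_simp
  rw [energy_eq] at hint ⊢
  have hmass : IntervalIntegrable (fun r ↦ f r ^ 2 * sin r) volume 0 π :=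
    ((hfc.pow 2).mul continuousOn_sin).intervalIntegrable_of_Icc pi_pos.le
  exact mul_integral_le_integral_energy_of_riccati (φ := fun r ↦ α * cos r) pi_pos.le
    (by fun_prop) (fun r _ ↦ (hasDerivAt_cos r).const_mul α)
    hfc (fun r hr ↦ (hf.differentiableAt (isOpen_Ioo.mem_nhds hr)).hasDerivAt)
    hf0 hfπ (fun r ↦ sin_pos_of_mem_Ioo)
    (fun r hr ↦ (riccati_mul_cos (sin_pos_of_mem_Ioo hr).ne').le) hmass hint

/-- Variational lower bound for the singular Sturm–Liouville problem on `(0, π)`: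
for every smooth `f` compactly supported in `(0, π)`,
`∫₀^π (f'² + α² f²/sin² r) sin r dr ≥ α(α+1) ∫₀^π f² sin r dr`. -/
theorem sturm_liouville_variational_bound (α : ℝ) (hα : 0 < α) (f : ℝ → ℝ)
    (hf : ContDiff ℝ (⊤ : ℕ∞) f) (hsupp : HasCompactSupport f)
    (hsub : tsupport f ⊆ Ioo 0 π) :
    α * (α + 1) * ∫ r in (0:ℝ)..π, (f r) ^ 2 * Real.sin r ≤
      ∫ r in (0:ℝ)..π,
        ((deriv f r) ^ 2 + α ^ 2 * (f r) ^ 2 / (Real.sin r) ^ 2) * Real.sin r := by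
  have hf1 : ContDiff ℝ 1 f := hf.of_le (by simp)
  have hint := (continuous_energy_density (α ^ 2) hf1 continuous_sin fun r hr ↦
    (sin_pos_of_mem_Ioo (hsub hr)).ne').intervalIntegrable (μ := volume) 0 π
  exact sturm_liouville_variational_bound_general α hf.continuous.continuousOn
    (hf1.differentiable one_ne_zero).differentiableOn
    (image_eq_zero_of_notMem_tsupport fun h ↦ (hsub h).1.false)
    (image_eq_zero_of_notMem_tsupport fun h ↦ (hsub h).2.false) hint
end

section
/- Let ν ∈ (0,1/2] and let G*(a) = a(4π−a) for a ∈ (0,4π). Then the infimum over all f in the admissible class F(G*) of the Rayleigh quotient (∫₀^{4π} (G*(a) f'(a)² + 4π²ν² f(a)²/G*(a)) da) / (∫₀^{4π} f(a)² da) equals ν(ν+1), and it is attained by the function f₀(a) = (a(4π−a))^{ν/2}. -/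
open MeasureTheory Real Set Filter

/-!
Let `G` be a positive weight on `(0, M)` and `φ > 0` a solution of
`-(G φ')' + 4π²ν² φ / G = κ φ`. Then `p = G φ' / φ` solves the Riccati equation
`p' = (4π²ν² - p²) / G - κ`, and completing the square gives, for every admissible `f`,

  `G f'² + 4π²ν² f² / G = κ f² + G (f' - (p / G) f)² + (p f²)'`.

If `p` is bounded and `1 / G` is not integrable at the two ends, then `p f²`, which has a limit
there and is integrable against `1 / G`, vanishes at the ends, so the total derivative integrates
to zero. The Rayleigh quotient is therefore at least `κ`, with equality when `f' = (p / G) f`. On a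
round sphere the choice `p = (ν / 2) G'`, that is `φ = G ^ (ν / 2)`, solves the Riccati equation.
-/

open Topology Asymptotics

section EndpointVanishing

variable {E F : Type*} [NormedAddCommGroup E] [NormedSpace ℝ E] [NormedAddCommGroup F]

lemma not_integrableAtFilter_of_sub_inv_isBigO {g : ℝ → F} {c : ℝ} {l : Filter ℝ} [NeBot l]
    [TendstoIxxClass Icc l l] (hl : l ≤ 𝓝[≠] c) (hg : (fun x => (x - c)⁻¹) =O[l] g) :
    ¬ IntegrableAtFilter g l := by
  have hderiv : ∀ᶠ x in 𝓝[≠] c, HasDerivAt (fun x => log (x - c)) (x - c)⁻¹ x := by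
    filter_upwards [self_mem_nhdsWithin] with x hx
    simpa using ((hasDerivAt_id x).sub_const c).log (sub_ne_zero.2 hx)
  have hlog : Tendsto (fun x => ‖log (x - c)‖) (𝓝[≠] c) atTop := by
    refine tendsto_abs_atBot_atTop.comp (tendsto_log_nhdsNE_zero.comp ?_)
    rw [← sub_self c]
    exact ((hasDerivAt_id c).sub_const c).tendsto_nhdsNE one_ne_zero
  rintro ⟨s, hs, hint⟩
  refine not_integrableOn_of_tendsto_norm_atTop_of_deriv_isBigO_filter l hs
    ((hderiv.filter_mono hl).mono fun x hx => hx.differentiableAt) (hlog.mono_left hl) ?_ hint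
  exact hg.congr' ((hderiv.filter_mono hl).mono fun x hx => hx.deriv.symm) .rfl

lemma not_integrableAtFilter_inv_of_differentiableAt {G : ℝ → ℝ} {c : ℝ} {l : Filter ℝ} [NeBot l]
    [TendstoIxxClass Icc l l] (hl : l ≤ 𝓝[≠] c) (hG : DifferentiableAt ℝ G c) (hGc : G c = 0)
    (hne : ∀ᶠ x in l, G x ≠ 0) : ¬ IntegrableAtFilter (fun x => (G x)⁻¹) l := by
  have hO : G =O[l] fun x => x - c := by
    simpa only [hGc, sub_zero] using hG.isBigO_sub.mono (hl.trans nhdsWithin_le_nhds)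
  exact not_integrableAtFilter_of_sub_inv_isBigO hl
    (hO.inv_rev (hne.mono fun x hx h0 => absurd h0 hx))

lemma eq_zero_of_tendsto_of_integrableAtFilter_smul {α : Type*} [MeasurableSpace α]
    {μ : Measure α} {l : Filter α} [l.IsMeasurablyGenerated] {w : α → ℝ} {u : α → E} {c : E}
    (hwm : StronglyMeasurableAtFilter w l μ) (hw : ¬ IntegrableAtFilter w l μ)
    (hu : Tendsto u l (𝓝 c)) (hwu : IntegrableAtFilter (fun x => w x • u x) l μ) : c = 0 := by
  by_contra hc
  have hone : (fun _ => (1 : ℝ)) =O[l] u := (isBigO_const_left_iff_pos_le_norm one_ne_zero).2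
    ⟨‖c‖ / 2, by positivity, hu.norm.eventually_const_le (half_lt_self (by positivity))⟩
  have hO : w =O[l] fun x => w x • u x := by
    simpa using (isBigO_refl w l).smul hone
  exact hw (hO.integrableAtFilter hwm hwu)

variable [CompleteSpace E]

lemma exists_continuousOn_Icc_eqOn_Ioo_of_hasDerivAt {a b : ℝ} (hab : a < b) {u u' : ℝ → E}
    (hderiv : ∀ x ∈ Ioo a b, HasDerivAt u (u' x) x) (hint : IntegrableOn u' (Ioo a b)) :
    ∃ v : ℝ → E, ContinuousOn v (Icc a b) ∧ EqOn v u (Ioo a b) := by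
  obtain ⟨m, hm⟩ : (Ioo a b).Nonempty := nonempty_Ioo.2 hab
  have hint' : IntervalIntegrable u' volume a b :=
    (intervalIntegrable_iff_integrableOn_Ioo_of_le hab.le).2 hint
  refine ⟨fun x => u m + ∫ t in m..x, u' t, ?_, fun x hx => ?_⟩
  · rw [← uIcc_of_le hab.le]
    exact continuousOn_const.add (intervalIntegral.continuousOn_primitive_interval' hint'
      (Icc_subset_uIcc (Ioo_subset_Icc_self hm)))
  · have hsub : uIcc m x ⊆ Ioo a b := ordConnected_Ioo.uIcc_subset hm hx
    have hftc : ∫ t in m..x, u' t = u x - u m :=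
      intervalIntegral.integral_eq_sub_of_hasDerivAt (fun t ht => hderiv t (hsub ht))
        (hint'.mono_set ((hsub.trans Ioo_subset_Icc_self).trans Icc_subset_uIcc))
    simp only [hftc, add_sub_cancel]

lemma setIntegral_Ioo_eq_zero_of_hasDerivAt_of_not_integrableAtFilter {a b : ℝ} (hab : a < b)
    {w : ℝ → ℝ} {u u' : ℝ → E} (hderiv : ∀ x ∈ Ioo a b, HasDerivAt u (u' x) x)
    (hint : IntegrableOn u' (Ioo a b)) (hwu : IntegrableOn (fun x => w x • u x) (Ioo a b))
    (hwm : AEStronglyMeasurable w (volume.restrict (Ioo a b)))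
    (hwa : ¬ IntegrableAtFilter w (𝓝[>] a)) (hwb : ¬ IntegrableAtFilter w (𝓝[<] b)) :
    ∫ x in Ioo a b, u' x = 0 := by
  obtain ⟨v, hv, hvu⟩ := exists_continuousOn_Icc_eqOn_Ioo_of_hasDerivAt hab hderiv hint
  have hIa : Ioo a b ∈ 𝓝[>] a := Ioo_mem_nhdsGT hab
  have hIb : Ioo a b ∈ 𝓝[<] b := Ioo_mem_nhdsLT hab
  have hua : Tendsto u (𝓝[>] a) (𝓝 (v a)) :=
    ((hv a (left_mem_Icc.2 hab.le)).mono_left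
      (nhdsWithin_le_of_mem (mem_of_superset hIa Ioo_subset_Icc_self))).congr'
      (mem_of_superset hIa hvu)
  have hub : Tendsto u (𝓝[<] b) (𝓝 (v b)) :=
    ((hv b (right_mem_Icc.2 hab.le)).mono_left
      (nhdsWithin_le_of_mem (mem_of_superset hIb Ioo_subset_Icc_self))).congr'
      (mem_of_superset hIb hvu)
  have hva : v a = 0 :=
    eq_zero_of_tendsto_of_integrableAtFilter_smul ⟨_, hIa, hwm⟩ hwa hua ⟨_, hIa, hwu⟩
  have hvb : v b = 0 :=
    eq_zero_of_tendsto_of_integrableAtFilter_smul ⟨_, hIb, hwm⟩ hwb hub ⟨_, hIb, hwu⟩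
  rw [← integral_Ioc_eq_integral_Ioo, ← intervalIntegral.integral_of_le hab.le,
    intervalIntegral.integral_eq_sub_of_hasDerivAt_of_tendsto hab hderiv
      ((intervalIntegrable_iff_integrableOn_Ioo_of_le hab.le).2 hint) hua hub, hva, hvb, sub_zero]

end EndpointVanishing

/-- A positive continuous weight on `(0, M)` whose reciprocal is not integrable at either end, so
that functions with `f / √G ∈ L²` are forced to satisfy Dirichlet conditions. -/
structure IsSingularWeight (M : ℝ) (G : ℝ → ℝ) : Prop where
  continuousOn : ContinuousOn G (Ioo 0 M)
  pos : ∀ a ∈ Ioo 0 M, 0 < G a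
  not_integrableAtFilter_inv_left : ¬ IntegrableAtFilter (fun a => (G a)⁻¹) (𝓝[>] 0)
  not_integrableAtFilter_inv_right : ¬ IntegrableAtFilter (fun a => (G a)⁻¹) (𝓝[<] M)

/-- A solution `p`, continuous up to the ends of `(0, M)`, of the Riccati equation of
`-(G φ')' + 4π²ν² φ / G = κ φ`, which is the equation satisfied by `p = G φ' / φ`. -/
structure IsRiccatiSolution (M ν κ : ℝ) (G p : ℝ → ℝ) : Prop where
  continuousOn : ContinuousOn p (Icc 0 M)
  hasDerivAt : ∀ a ∈ Ioo 0 M, HasDerivAt p ((4 * π ^ 2 * ν ^ 2 - p a ^ 2) / G a - κ) a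

namespace Admissible

variable {M ν κ : ℝ} {G f p : ℝ → ℝ}

lemma length_pos (hf : Admissible M G f) : 0 < M := by
  obtain ⟨-, hne, -⟩ := hf
  by_contra! hM
  exact hne (by simp [Ioo_eq_empty_of_le hM])

lemma integrableOn_sq (hf : Admissible M G f) : IntegrableOn (fun a => f a ^ 2) (Ioo 0 M) :=
  hf.2.2.2.1

lemma integrableOn_sq_div (hf : Admissible M G f) :
    IntegrableOn (fun a => f a ^ 2 / G a) (Ioo 0 M) :=
  hf.2.2.2.2.2

lemma setIntegral_sq_pos (hf : Admissible M G f) : 0 < ∫ a in Ioo 0 M, f a ^ 2 := by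
  have hsq := hf.integrableOn_sq
  obtain ⟨-, hne, -⟩ := hf
  refine (integral_nonneg fun a => sq_nonneg (f a)).lt_of_ne' fun hzero => hne ?_
  filter_upwards [(integral_eq_zero_iff_of_nonneg (fun a => sq_nonneg (f a)) hsq).1 hzero]
    with a ha using pow_eq_zero_iff two_ne_zero |>.1 ha

lemma integrableOn_mul_deriv (hG : ∀ a ∈ Ioo 0 M, 0 < G a) (hf : Admissible M G f) :
    IntegrableOn (fun a => f a * deriv f a) (Ioo 0 M) := by
  obtain ⟨hmeas, -, -, -, henergy, hpotential⟩ := hf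
  refine Integrable.mono' (henergy.add hpotential)
    (hmeas.mul (measurable_deriv f)).aestronglyMeasurable ?_
  filter_upwards [ae_restrict_mem measurableSet_Ioo] with a ha
  have hGa := hG a ha
  have hsqrt : √(G a) ≠ 0 := (sqrt_pos.2 hGa).ne'
  calc ‖f a * deriv f a‖ = |√(G a) * deriv f a| * |f a / √(G a)| := by
        rw [← abs_mul, norm_eq_abs]; congr 1; field_simp
    _ ≤ |√(G a) * deriv f a| ^ 2 + |f a / √(G a)| ^ 2 := by
        nlinarith [sq_nonneg (|√(G a) * deriv f a| - |f a / √(G a)|),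
          sq_nonneg (|√(G a) * deriv f a| + |f a / √(G a)|)]
    _ = G a * deriv f a ^ 2 + f a ^ 2 / G a := by
        simp only [sq_abs, mul_pow, div_pow, sq_sqrt hGa.le]

lemma integrableOn_energy_s8 (ν : ℝ) (hf : Admissible M G f) :
    IntegrableOn (fun a => G a * deriv f a ^ 2 + 4 * π ^ 2 * ν ^ 2 * f a ^ 2 / G a) (Ioo 0 M) := by
  obtain ⟨-, -, -, -, henergy, hpotential⟩ := hf
  simp only [mul_div_assoc]
  exact henergy.add (hpotential.const_mul _)

lemma integrableOn_continuousOn_mul_sq_div (hf : Admissible M G f) {q : ℝ → ℝ}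
    (hq : ContinuousOn q (Icc 0 M)) : IntegrableOn (fun a => q a * (f a ^ 2 / G a)) (Ioo 0 M) :=
  hf.integrableOn_sq_div.continuousOn_mul_of_subset hq isCompact_Icc measurableSet_Ioo
    Ioo_subset_Icc_self

lemma hasDerivAt_riccati_mul_sq (hp : IsRiccatiSolution M ν κ G p) (hf : Admissible M G f)
    {a : ℝ} (ha : a ∈ Ioo 0 M) :
    HasDerivAt (fun x => p x * f x ^ 2)
      (((4 * π ^ 2 * ν ^ 2 - p a ^ 2) / G a - κ) * f a ^ 2 + p a * (2 * (f a * deriv f a))) a := by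
  obtain ⟨-, -, hdiff, -⟩ := hf
  exact ((hp.hasDerivAt a ha).mul ((hdiff a ha).hasDerivAt.pow 2)).congr_deriv (by
    simp only [Pi.pow_apply]; ring)

lemma integrableOn_deriv_riccati_mul_sq (hG : ∀ a ∈ Ioo 0 M, 0 < G a)
    (hp : IsRiccatiSolution M ν κ G p) (hf : Admissible M G f) :
    IntegrableOn (deriv fun x => p x * f x ^ 2) (Ioo 0 M) := by
  have hpotential : IntegrableOn (fun a => (4 * π ^ 2 * ν ^ 2 - p a ^ 2) * (f a ^ 2 / G a))
      (Ioo 0 M) :=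
    hf.integrableOn_continuousOn_mul_sq_div (continuousOn_const.sub (hp.continuousOn.pow 2))
  have hcross : IntegrableOn (fun a => p a * (2 * (f a * deriv f a))) (Ioo 0 M) :=
    IntegrableOn.continuousOn_mul_of_subset hp.continuousOn
      ((hf.integrableOn_mul_deriv hG).const_mul 2) isCompact_Icc measurableSet_Ioo
      Ioo_subset_Icc_self
  refine IntegrableOn.congr_fun ((hpotential.sub (hf.integrableOn_sq.const_mul κ)).add hcross)
    (fun a ha => ?_) measurableSet_Ioo
  rw [(hf.hasDerivAt_riccati_mul_sq hp ha).deriv]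
  simp only [Pi.add_apply, Pi.sub_apply]
  ring

lemma setIntegral_deriv_riccati_mul_sq (hG : IsSingularWeight M G)
    (hp : IsRiccatiSolution M ν κ G p) (hf : Admissible M G f) :
    ∫ a in Ioo 0 M, deriv (fun x => p x * f x ^ 2) a = 0 := by
  refine setIntegral_Ioo_eq_zero_of_hasDerivAt_of_not_integrableAtFilter hf.length_pos
    (fun a ha => (hf.hasDerivAt_riccati_mul_sq hp ha).differentiableAt.hasDerivAt)
    (hf.integrableOn_deriv_riccati_mul_sq hG.pos hp) ?_
    ((hG.continuousOn.inv₀ fun a ha => (hG.pos a ha).ne').aestronglyMeasurable measurableSet_Ioo)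
    hG.not_integrableAtFilter_inv_left hG.not_integrableAtFilter_inv_right
  refine (hf.integrableOn_continuousOn_mul_sq_div hp.continuousOn).congr
    (Eventually.of_forall fun a => ?_)
  simp only [smul_eq_mul, Pi.inv_apply]
  ring

lemma setIntegral_energy_eq (hG : IsSingularWeight M G) (hp : IsRiccatiSolution M ν κ G p)
    (hf : Admissible M G f) :
    ∫ a in Ioo 0 M, (G a * deriv f a ^ 2 + 4 * π ^ 2 * ν ^ 2 * f a ^ 2 / G a) =
      κ * (∫ a in Ioo 0 M, f a ^ 2) +
        ∫ a in Ioo 0 M, G a * (deriv f a - p a / G a * f a) ^ 2 := by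
  have henergy := hf.integrableOn_energy_s8 ν
  have hmass : IntegrableOn (fun a => κ * f a ^ 2) (Ioo 0 M) := hf.integrableOn_sq.const_mul κ
  have hsquare : ∫ a in Ioo 0 M, G a * (deriv f a - p a / G a * f a) ^ 2 =
      ∫ a in Ioo 0 M, (G a * deriv f a ^ 2 + 4 * π ^ 2 * ν ^ 2 * f a ^ 2 / G a - κ * f a ^ 2
        - deriv (fun x => p x * f x ^ 2) a) := by
    refine setIntegral_congr_fun measurableSet_Ioo fun a ha => ?_
    have hGa := (hG.pos a ha).ne'
    simp only [(hf.hasDerivAt_riccati_mul_sq hp ha).deriv]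
    field_simp
    ring
  rw [hsquare, integral_sub (by exact henergy.sub hmass)
    (hf.integrableOn_deriv_riccati_mul_sq hG.pos hp), integral_sub henergy hmass,
    hf.setIntegral_deriv_riccati_mul_sq hG hp, integral_const_mul]
  ring

lemma le_rayleigh (hG : IsSingularWeight M G) (hp : IsRiccatiSolution M ν κ G p)
    (hf : Admissible M G f) : κ ≤ rayleigh M ν G f := by
  rw [rayleigh, le_div_iff₀ hf.setIntegral_sq_pos, hf.setIntegral_energy_eq hG hp]
  exact le_add_of_nonneg_right (setIntegral_nonneg measurableSet_Ioo fun a ha =>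
    mul_nonneg (hG.pos a ha).le (sq_nonneg _))

lemma rayleigh_eq_of_deriv_eq (hG : IsSingularWeight M G) (hp : IsRiccatiSolution M ν κ G p)
    (hf : Admissible M G f)
    (hderiv : ∀ a ∈ Ioo 0 M, deriv f a = p a / G a * f a) : rayleigh M ν G f = κ := by
  rw [rayleigh, div_eq_iff hf.setIntegral_sq_pos.ne', hf.setIntegral_energy_eq hG hp, add_eq_left]
  refine setIntegral_eq_zero_of_forall_eq_zero fun a ha => ?_
  rw [hderiv a ha, sub_self, zero_pow two_ne_zero, mul_zero]

lemma kappa1_eq_of_deriv_eq (hG : IsSingularWeight M G) (hp : IsRiccatiSolution M ν κ G p)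
    (hf : Admissible M G f)
    (hderiv : ∀ a ∈ Ioo 0 M, deriv f a = p a / G a * f a) : kappa1 M ν G = κ := by
  refine IsLeast.csInf_eq ⟨⟨f, hf, (hf.rayleigh_eq_of_deriv_eq hG hp hderiv).symm⟩, ?_⟩
  rintro _ ⟨g, hg, rfl⟩
  exact hg.le_rayleigh hG hp

end Admissible

lemma integrableOn_rpow_mul_sub_rpow {M p q : ℝ} (hM : 0 < M) (hp : -1 < p) (hq : -1 < q) :
    IntegrableOn (fun a => a ^ p * (M - a) ^ q) (Ioo 0 M) := by
  have hleft : IntervalIntegrable (fun a => a ^ p * (M - a) ^ (q + 1)) volume 0 M :=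
    (intervalIntegral.intervalIntegrable_rpow' hp).mul_continuousOn
      ((continuous_const.sub continuous_id).rpow_const
        fun _ => Or.inr (by linarith)).continuousOn
  have hright : IntervalIntegrable (fun a => a ^ (p + 1) * (M - a) ^ q) volume 0 M := by
    have hsub : IntervalIntegrable (fun a => (M - a) ^ q) volume 0 M := by
      simpa using
        ((intervalIntegral.intervalIntegrable_rpow' (a := 0) (b := M) hq).comp_sub_left M).symm
    exact hsub.continuousOn_mul
      (continuous_id.rpow_const fun _ => Or.inr (by linarith)).continuousOn
  have hsum := (hleft.add hright).const_mul M⁻¹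
  rw [intervalIntegrable_iff_integrableOn_Ioo_of_le hM.le] at hsum
  refine hsum.congr_fun (fun a ha => ?_) measurableSet_Ioo
  -- Multiplying by `1 = M⁻¹ * ((M - a) + a)` separates the two singularities.
  simp only [rpow_add_one ha.1.ne', rpow_add_one (sub_pos.2 ha.2).ne']
  field_simp
  ring

/-- The squared length of the boundary of a geodesic disk of area `a` in the round sphere of total
area `M`. -/
noncomputable def sphericalWeight (M : ℝ) : ℝ → ℝ :=
  fun a => 4 * π / M * (a * (M - a))

/-- `G φ' / φ` for `G = sphericalWeight M` and the ground state `φ = G ^ (ν / 2)`. -/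
noncomputable def sphericalRiccati (M ν : ℝ) : ℝ → ℝ :=
  fun a => ν / 2 * (4 * π / M * (M - 2 * a))

section Sphere

variable {M ν a : ℝ}

lemma sphericalWeight_four_pi : sphericalWeight (4 * π) = fun a => a * (4 * π - a) := by
  funext a
  rw [sphericalWeight, div_self (by positivity), one_mul]

lemma continuous_sphericalWeight (M : ℝ) : Continuous (sphericalWeight M) := by
  unfold sphericalWeight; fun_prop

lemma continuous_sphericalRiccati (M ν : ℝ) : Continuous (sphericalRiccati M ν) := by
  unfold sphericalRiccati; fun_prop

lemma sphericalWeight_pos (ha : a ∈ Ioo 0 M) : 0 < sphericalWeight M a :=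
  mul_pos (div_pos (by positivity) (ha.1.trans ha.2)) (mul_pos ha.1 (sub_pos.2 ha.2))

lemma hasDerivAt_sphericalWeight (M a : ℝ) :
    HasDerivAt (sphericalWeight M) (4 * π / M * (M - 2 * a)) a :=
  (((hasDerivAt_id a).mul ((hasDerivAt_id a).const_sub M)).const_mul (4 * π / M)).congr_deriv
    (by simp only [id_eq]; ring)

lemma isSingularWeight_sphericalWeight (hM : 0 < M) : IsSingularWeight M (sphericalWeight M) where
  continuousOn := (continuous_sphericalWeight M).continuousOn
  pos _ ha := sphericalWeight_pos ha
  not_integrableAtFilter_inv_left :=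
    not_integrableAtFilter_inv_of_differentiableAt (nhdsGT_le_nhdsNE 0)
      (hasDerivAt_sphericalWeight M 0).differentiableAt (by simp [sphericalWeight])
      (mem_of_superset (Ioo_mem_nhdsGT hM) fun _ ha => (sphericalWeight_pos ha).ne')
  not_integrableAtFilter_inv_right :=
    not_integrableAtFilter_inv_of_differentiableAt (nhdsLT_le_nhdsNE M)
      (hasDerivAt_sphericalWeight M M).differentiableAt (by simp [sphericalWeight])
      (mem_of_superset (Ioo_mem_nhdsLT hM) fun _ ha => (sphericalWeight_pos ha).ne')

lemma isRiccatiSolution_sphericalRiccati (M ν : ℝ) :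
    IsRiccatiSolution M ν (4 * π / M * (ν * (ν + 1))) (sphericalWeight M)
      (sphericalRiccati M ν) where
  continuousOn := (continuous_sphericalRiccati M ν).continuousOn
  hasDerivAt a ha := by
    have hM : M ≠ 0 := (ha.1.trans ha.2).ne'
    have ha₀ : a ≠ 0 := ha.1.ne'
    have hMa : M - a ≠ 0 := (sub_pos.2 ha.2).ne'
    have hlinear : HasDerivAt (sphericalRiccati M ν) (ν / 2 * (4 * π / M * (-(2 * 1)))) a :=
      ((((hasDerivAt_id a).const_mul 2).const_sub M).const_mul (4 * π / M)).const_mul (ν / 2)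
    refine hlinear.congr_deriv ?_
    simp only [sphericalRiccati, sphericalWeight]
    field_simp
    ring

lemma hasDerivAt_sphericalWeight_rpow (ν : ℝ) (ha : a ∈ Ioo 0 M) :
    HasDerivAt (fun x => sphericalWeight M x ^ (ν / 2))
      (sphericalRiccati M ν a / sphericalWeight M a * sphericalWeight M a ^ (ν / 2)) a := by
  have hG := (sphericalWeight_pos ha).ne'
  refine ((hasDerivAt_sphericalWeight M a).rpow_const (Or.inl hG)).congr_deriv ?_
  rw [rpow_sub_one hG, sphericalRiccati]
  ring

lemma integrableOn_sphericalWeight_rpow (hM : 0 < M) {s : ℝ} (hs : -1 < s) :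
    IntegrableOn (fun a => sphericalWeight M a ^ s) (Ioo 0 M) := by
  refine IntegrableOn.congr_fun ((integrableOn_rpow_mul_sub_rpow hM hs hs).const_mul
    ((4 * π / M) ^ s)) (fun a ha => ?_) measurableSet_Ioo
  have hMa : 0 < M - a := sub_pos.2 ha.2
  rw [sphericalWeight, mul_rpow (by positivity) (mul_pos ha.1 hMa).le, mul_rpow ha.1.le hMa.le]

lemma sphericalWeight_rpow_half_sq (ν : ℝ) (ha : a ∈ Ioo 0 M) :
    (sphericalWeight M a ^ (ν / 2)) ^ 2 = sphericalWeight M a ^ ν := by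
  rw [← rpow_mul_natCast (sphericalWeight_pos ha).le, Nat.cast_ofNat, div_mul_cancel₀ ν two_ne_zero]

lemma admissible_sphericalWeight_rpow (hM : 0 < M) (hν : 0 < ν) :
    Admissible M (sphericalWeight M) (fun a => sphericalWeight M a ^ (ν / 2)) := by
  have hpotential : IntegrableOn
      (fun a => (sphericalWeight M a ^ (ν / 2)) ^ 2 / sphericalWeight M a) (Ioo 0 M) := by
    refine (integrableOn_sphericalWeight_rpow hM (s := ν - 1) (by linarith)).congr_fun
      (fun a ha => ?_) measurableSet_Ioo
    simp only [sphericalWeight_rpow_half_sq ν ha, rpow_sub_one (sphericalWeight_pos ha).ne']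
  refine ⟨(continuous_sphericalWeight M).measurable.pow_const _, fun hzero => ?_,
    fun a ha => (hasDerivAt_sphericalWeight_rpow ν ha).differentiableAt, ?_, ?_, hpotential⟩
  · have hfalse : ∀ᵐ _ ∂volume.restrict (Ioo 0 M), False := by
      filter_upwards [hzero, ae_restrict_mem measurableSet_Ioo] with a ha₀ ha
      exact (rpow_pos_of_pos (sphericalWeight_pos ha) _).ne' ha₀
    rw [eventually_false_iff_eq_bot, ae_eq_bot, Measure.restrict_eq_zero] at hfalse
    exact isOpen_Ioo.measure_ne_zero volume (nonempty_Ioo.2 hM) hfalse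
  · exact (integrableOn_sphericalWeight_rpow hM (by linarith)).congr_fun
      (fun a ha => (sphericalWeight_rpow_half_sq ν ha).symm) measurableSet_Ioo
  · refine (hpotential.continuousOn_mul_of_subset
      ((continuous_sphericalRiccati M ν).pow 2).continuousOn isCompact_Icc measurableSet_Ioo
      Ioo_subset_Icc_self).congr_fun (fun a ha => ?_) measurableSet_Ioo
    have hG := (sphericalWeight_pos ha).ne'
    simp only [(hasDerivAt_sphericalWeight_rpow ν ha).deriv, Pi.pow_apply]
    field_simp

end Sphere

theorem kappa1_spherical_weight_general {M ν : ℝ} (hM : 0 < M) (hν : 0 < ν) :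
    kappa1 M ν (sphericalWeight M) = 4 * π / M * (ν * (ν + 1)) ∧
    Admissible M (sphericalWeight M) (fun a => sphericalWeight M a ^ (ν / 2)) ∧
    rayleigh M ν (sphericalWeight M) (fun a => sphericalWeight M a ^ (ν / 2)) =
      4 * π / M * (ν * (ν + 1)) := by
  have hG := isSingularWeight_sphericalWeight hM
  have hp := isRiccatiSolution_sphericalRiccati M ν
  have hφ := admissible_sphericalWeight_rpow hM hν
  have hφ' := fun a ha => (hasDerivAt_sphericalWeight_rpow (M := M) (a := a) ν ha).deriv
  exact ⟨hφ.kappa1_eq_of_deriv_eq hG hp hφ', hφ, hφ.rayleigh_eq_of_deriv_eq hG hp hφ'⟩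

/-- For the spherical weight `G*(a) = a(4π - a)` on `(0, 4π)`, the infimum of the
Rayleigh quotient over the admissible class equals `ν(ν+1)`, and it is attained
by `f₀(a) = (a(4π - a))^{ν/2}`. -/
theorem kappa1_spherical_weight (ν : ℝ) (hν : ν ∈ Ioc (0:ℝ) (1/2)) :
    kappa1 (4 * π) ν (fun a => a * (4 * π - a)) = ν * (ν + 1) ∧
    Admissible (4 * π) (fun a => a * (4 * π - a))
      (fun a => (a * (4 * π - a)) ^ (ν / 2)) ∧
    rayleigh (4 * π) ν (fun a => a * (4 * π - a))
      (fun a => (a * (4 * π - a)) ^ (ν / 2)) = ν * (ν + 1) := by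
  have hM : 0 < 4 * π := by positivity
  simpa only [sphericalWeight_four_pi, div_self hM.ne', one_mul] using
    kappa1_spherical_weight_general hM hν.1
end
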